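/- Let n ≥ 1 be an integer and let m : ℝ → ℝ be the unique increasing solution of m'' + m − m^{2n+1} = 0 with m(0) = 0 and m(x) → ±1 as x → ±∞. There exist constants β, c, C > 0 (depending only on n) such that the following holds: if v : ℝ → ℝ is bounded and continuous with inf_{θ∈ℝ} sup_{x∈ℝ} |v(x) − m(x−θ)| < β, and u : [0,∞) × ℝ → ℝ is continuous, bounded on [0,T] × ℝ for every T > 0, satisfies u(0,·) = v, and on (0,∞) × ℝ is once continuously differentiable in t and twice continuously differentiable in x with ∂_t u = ∂_x² u + u − u^{2n+1}, then there exists ζ ∈ ℝ such that for all t ≥ 0, sup_{x∈ℝ} |u(t,x) − m(x − ζ)| ≤ C·e^{−ct}·inf_{θ∈ℝ} sup_{x∈ℝ} |v(x) − m(x−θ)|. -/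

import Mathlib

open Filter MeasureTheory

/-!
Let `w` be a bounded solution of the equation linearized at the wave `m`. In the cross difference
`w x * m' y - w y * m' x` the component of `w` along `m'` cancels, and as a function of two
space variables it solves the linearized equation in `x` and `y` jointly, vanishing for `x = y`. On
`{y ≤ x}` it is compared, by the parabolic maximum principle, with an explicit stationary strict
supersolution, so it decays exponentially; putting `y = 0` shows that `w` converges exponentially
to the line spanned by `m'`. No spectral theory enters, only `m' > 0`, `m'' = O(m')` and the
negativity of the potential near infinity.

Since `m'` is the infinitesimal translation of `m`, up to quadratic terms the nonlinear flow over a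
long enough fixed time therefore halves the distance to a suitable translate of `m`. The successive
phases form a geometrically convergent sequence, whose limit is `ζ`.
-/

open Set
open scoped Topology

/-! ### The heat operator in two space variables -/

/-- `f` has second derivative `f''` at `x` in the classical sense: it is differentiable near `x`,
and its derivative is differentiable at `x`. -/
def HasSecondDerivAt (f : ℝ → ℝ) (f'' x : ℝ) : Prop :=
  ∃ f' : ℝ → ℝ, (∀ᶠ y in 𝓝 x, HasDerivAt f (f' y) y) ∧ HasDerivAt f' f'' x

namespace HasSecondDerivAt

variable {f g : ℝ → ℝ} {a b x : ℝ}

theorem of_hasDerivAt {f' : ℝ → ℝ} (hf : ∀ y, HasDerivAt f (f' y) y) (hf' : HasDerivAt f' a x) :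
    HasSecondDerivAt f a x :=
  ⟨f', Eventually.of_forall hf, hf'⟩

theorem const (c x : ℝ) : HasSecondDerivAt (fun _ => c) 0 x :=
  .of_hasDerivAt (fun y => hasDerivAt_const y c) (hasDerivAt_const x 0)

theorem const_mul (c : ℝ) (hf : HasSecondDerivAt f a x) :
    HasSecondDerivAt (fun y => c * f y) (c * a) x := by
  obtain ⟨f', hf, hf'⟩ := hf
  exact ⟨_, hf.mono fun y hy => hy.const_mul c, hf'.const_mul c⟩

theorem mul_const (hf : HasSecondDerivAt f a x) (c : ℝ) :
    HasSecondDerivAt (fun y => f y * c) (a * c) x := by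
  simpa only [mul_comm] using hf.const_mul c

theorem neg (hf : HasSecondDerivAt f a x) : HasSecondDerivAt (fun y => -f y) (-a) x := by
  simpa only [neg_one_mul] using hf.const_mul (-1)

theorem add (hf : HasSecondDerivAt f a x) (hg : HasSecondDerivAt g b x) :
    HasSecondDerivAt (fun y => f y + g y) (a + b) x := by
  obtain ⟨f', hf, hf'⟩ := hf
  obtain ⟨g', hg, hg'⟩ := hg
  exact ⟨_, (hf.and hg).mono fun y hy => hy.1.add hy.2, hf'.add hg'⟩

theorem sub (hf : HasSecondDerivAt f a x) (hg : HasSecondDerivAt g b x) :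
    HasSecondDerivAt (fun y => f y - g y) (a - b) x := by
  simpa only [sub_eq_add_neg] using hf.add hg.neg

theorem mul {f' g' : ℝ → ℝ} (hf : ∀ y, HasDerivAt f (f' y) y) (hf' : HasDerivAt f' a x)
    (hg : ∀ y, HasDerivAt g (g' y) y) (hg' : HasDerivAt g' b x) :
    HasSecondDerivAt (fun y => f y * g y) (a * g x + 2 * (f' x * g' x) + f x * b) x := by
  refine .of_hasDerivAt (fun y => (hf y).mul (hg y)) ?_
  exact ((hf'.mul (hg x)).add ((hf x).mul hg')).congr_deriv (by ring)

theorem comp_add_const {c : ℝ} (hf : HasSecondDerivAt f a (x + c)) :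
    HasSecondDerivAt (fun y => f (y + c)) a x := by
  obtain ⟨f', hf, hf'⟩ := hf
  have hshift : Tendsto (· + c) (𝓝 x) (𝓝 (x + c)) := (continuous_add_const c).tendsto x
  exact ⟨_, (hshift.eventually hf).mono fun y hy => hy.comp_add_const y c, hf'.comp_add_const x c⟩

theorem nonpos_of_isLocalMax (hf : HasSecondDerivAt f a x) (hmax : IsLocalMax f x) : a ≤ 0 := by
  obtain ⟨f', hf, hf'⟩ := hf
  have hderiv : deriv f =ᶠ[𝓝 x] f' := hf.mono fun y hy => hy.deriv
  have hderiv₂ : deriv (deriv f) x = a := hderiv.deriv_eq.trans hf'.deriv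
  by_contra! ha
  have hmin : IsLocalMin f x := isLocalMin_of_deriv_deriv_pos (hderiv₂ ▸ ha) hmax.deriv_eq_zero
    hf.self_of_nhds.continuousAt
  have hconst : f =ᶠ[𝓝 x] fun _ => f x := (hmax.and hmin).mono fun y hy => le_antisymm hy.1 hy.2
  have hzero : deriv (deriv f) x = 0 := by simpa using hconst.deriv.deriv_eq
  exact ha.ne' (hderiv₂.symm.trans hzero)

end HasSecondDerivAt

theorem nonneg_of_hasDerivAt_of_le_left {f : ℝ → ℝ} {f' t : ℝ} (hf : HasDerivAt f f' t)
    (hmax : ∀ᶠ s in 𝓝[<] t, f s ≤ f t) : 0 ≤ f' := by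
  refine ge_of_tendsto (hasDerivAt_iff_tendsto_slope_left_right.mp hf).1 ?_
  filter_upwards [hmax, self_mem_nhdsWithin] with s hs hst
  rw [slope_def_field]
  exact div_nonneg_of_nonpos (sub_nonpos.mpr hs) (sub_nonpos.mpr (le_of_lt hst))

/-- The function `Z` of one time and two space variables satisfies `Z_t - Z_xx - Z_yy = a` at
`(t, x, y)`, all derivatives being classical. -/
def HasHeatOpAt (Z : ℝ → ℝ → ℝ → ℝ) (a t x y : ℝ) : Prop :=
  ∃ zt zxx zyy, HasDerivAt (fun s => Z s x y) zt t ∧ HasSecondDerivAt (fun ξ => Z t ξ y) zxx x ∧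
    HasSecondDerivAt (fun ξ => Z t x ξ) zyy y ∧ zt - zxx - zyy = a

namespace HasHeatOpAt

variable {Z W : ℝ → ℝ → ℝ → ℝ} {a b t x y : ℝ}

theorem const (c t x y : ℝ) : HasHeatOpAt (fun _ _ _ => c) 0 t x y :=
  ⟨0, 0, 0, hasDerivAt_const t c, .const c x, .const c y, by ring⟩

theorem sub (hZ : HasHeatOpAt Z a t x y) (hW : HasHeatOpAt W b t x y) :
    HasHeatOpAt (fun t x y => Z t x y - W t x y) (a - b) t x y := by
  obtain ⟨zt, zxx, zyy, hzt, hzxx, hzyy, rfl⟩ := hZ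
  obtain ⟨wt, wxx, wyy, hwt, hwxx, hwyy, rfl⟩ := hW
  exact ⟨_, _, _, hzt.sub hwt, hzxx.sub hwxx, hzyy.sub hwyy, by ring⟩

theorem time_mul {A : ℝ → ℝ} {A' : ℝ} (hA : HasDerivAt A A' t) (hZ : HasHeatOpAt Z a t x y) :
    HasHeatOpAt (fun t x y => A t * Z t x y) (A' * Z t x y + A t * a) t x y := by
  obtain ⟨zt, zxx, zyy, hzt, hzxx, hzyy, rfl⟩ := hZ
  exact ⟨_, _, _, hA.mul hzt, hzxx.const_mul _, hzyy.const_mul _, by ring⟩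

theorem nonneg_of_max (hZ : HasHeatOpAt Z a t x y) (ht : ∀ᶠ s in 𝓝[<] t, Z s x y ≤ Z t x y)
    (hx : IsLocalMax (fun ξ => Z t ξ y) x) (hy : IsLocalMax (fun ξ => Z t x ξ) y) : 0 ≤ a := by
  obtain ⟨zt, zxx, zyy, hzt, hzxx, hzyy, rfl⟩ := hZ
  linarith [nonneg_of_hasDerivAt_of_le_left hzt ht, hzxx.nonpos_of_isLocalMax hx,
    hzyy.nonpos_of_isLocalMax hy]

end HasHeatOpAt

/-! ### The parabolic maximum principle -/

section MaximumPrinciple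

variable {Z : ℝ → ℝ → ℝ → ℝ} {Ω : Set (ℝ × ℝ)} {T : ℝ}

theorem exists_max_of_pos {R : ℝ} (hΩ : IsClosed Ω)
    (hcont : ContinuousOn (fun p : ℝ × ℝ × ℝ => Z p.1 p.2.1 p.2.2) (Icc 0 T ×ˢ Ω))
    (hsuper : ∀ t ∈ Icc 0 T, ∀ x y, (x, y) ∈ Ω → 0 < Z t x y → ‖(x, y)‖ ≤ R)
    {t₁ x₁ y₁ : ℝ} (ht₁ : t₁ ∈ Icc 0 T) (hxy₁ : (x₁, y₁) ∈ Ω) (hpos : 0 < Z t₁ x₁ y₁) :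
    ∃ t ∈ Icc 0 T, ∃ x y, (x, y) ∈ Ω ∧ 0 < Z t x y ∧
      ∀ t' ∈ Icc 0 T, ∀ x' y', (x', y') ∈ Ω → Z t' x' y' ≤ Z t x y := by
  set K : Set (ℝ × ℝ × ℝ) := Icc 0 T ×ˢ (Ω ∩ Metric.closedBall 0 R)
  have hKc : IsCompact K := isCompact_Icc.prod ((isCompact_closedBall 0 R).inter_left hΩ)
  have hmemK : ∀ t ∈ Icc 0 T, ∀ x y, (x, y) ∈ Ω → 0 < Z t x y → (t, x, y) ∈ K :=
    fun t ht x y hxy hZ => ⟨ht, hxy, mem_closedBall_zero_iff.mpr (hsuper t ht x y hxy hZ)⟩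
  have hp₁ := hmemK t₁ ht₁ x₁ y₁ hxy₁ hpos
  obtain ⟨⟨t, x, y⟩, ⟨ht, hxy, -⟩, hmax⟩ :=
    hKc.exists_isMaxOn ⟨_, hp₁⟩ (hcont.mono (prod_mono_right inter_subset_left))
  have hZ : 0 < Z t x y := hpos.trans_le (hmax hp₁)
  refine ⟨t, ht, x, y, hxy, hZ, fun t' ht' x' y' hxy' => ?_⟩
  rcases le_or_gt (Z t' x' y') 0 with hZ' | hZ'
  · exact hZ'.trans hZ.le
  · exact hmax (hmemK t' ht' x' y' hxy' hZ')

theorem nonpos_of_heatOp_neg {R : ℝ} (hΩ : IsClosed Ω)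
    (hcont : ContinuousOn (fun p : ℝ × ℝ × ℝ => Z p.1 p.2.1 p.2.2) (Icc 0 T ×ˢ Ω))
    (hsuper : ∀ t ∈ Icc 0 T, ∀ x y, (x, y) ∈ Ω → 0 < Z t x y → ‖(x, y)‖ ≤ R)
    (hinit : ∀ x y, (x, y) ∈ Ω → Z 0 x y ≤ 0)
    (hbdry : ∀ t ∈ Icc 0 T, ∀ x y, (x, y) ∈ frontier Ω → Z t x y ≤ 0)
    (hheat : ∀ t ∈ Ioc 0 T, ∀ x y, (x, y) ∈ interior Ω → 0 < Z t x y →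
      ∃ a < 0, HasHeatOpAt Z a t x y) :
    ∀ t ∈ Icc 0 T, ∀ x y, (x, y) ∈ Ω → Z t x y ≤ 0 := by
  intro t₁ ht₁ x₁ y₁ hxy₁
  by_contra! hpos
  obtain ⟨t, ht, x, y, hxy, hZ, hmax⟩ := exists_max_of_pos hΩ hcont hsuper ht₁ hxy₁ hpos
  have ht0 : 0 < t := ht.1.lt_of_ne (by rintro rfl; exact (hinit x y hxy).not_gt hZ)
  have hint : (x, y) ∈ interior Ω :=
    by_contra fun hni => (hbdry t ht x y ⟨subset_closure hxy, hni⟩).not_gt hZ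
  have hnhds : ∀ᶠ p in 𝓝 (x, y), p ∈ Ω := mem_interior_iff_mem_nhds.mp hint
  obtain ⟨a, ha, hop⟩ := hheat t ⟨ht0, ht.2⟩ x y hint hZ
  refine ha.not_ge (hop.nonneg_of_max ?_ ?_ ?_)
  · filter_upwards [Ioo_mem_nhdsLT ht0] with s hs
    exact hmax s ⟨hs.1.le, hs.2.le.trans ht.2⟩ x y hxy
  · have hline : Tendsto (fun ξ => (ξ, y)) (𝓝 x) (𝓝 (x, y)) := Continuous.tendsto (by fun_prop) x
    exact (hline.eventually hnhds).mono fun ξ hξ => hmax t ht ξ y hξ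
  · have hline : Tendsto (fun ξ => (x, ξ)) (𝓝 y) (𝓝 (x, y)) := Continuous.tendsto (by fun_prop) y
    exact (hline.eventually hnhds).mono fun ξ hξ => hmax t ht x ξ hξ

/-- The coercive function `1 + x² + y² + 5t` penalizes spatial infinity; since `5 > 2 + 2`, it is a
strict supersolution of the heat equation. -/
def heatPenalty (t x y : ℝ) : ℝ := 1 + x ^ 2 + y ^ 2 + 5 * t

theorem heatPenalty_pos {t : ℝ} (ht : 0 ≤ t) (x y : ℝ) : 0 < heatPenalty t x y := by
  unfold heatPenalty
  positivity

theorem hasHeatOpAt_heatPenalty (t x y : ℝ) : HasHeatOpAt heatPenalty 1 t x y := by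
  have hsq : ∀ ξ, HasSecondDerivAt (fun ξ : ℝ => ξ ^ 2) 2 ξ := fun ξ =>
    .of_hasDerivAt (f' := fun η => 2 * η) (fun η => by simpa using hasDerivAt_pow 2 η)
      (by simpa using (hasDerivAt_id ξ).const_mul 2)
  have ht : HasDerivAt (fun s => 1 + x ^ 2 + y ^ 2 + 5 * s) 5 t := by
    simpa using ((hasDerivAt_id t).const_mul 5).const_add (1 + x ^ 2 + y ^ 2)
  exact ⟨5, _, _, ht,
    (((HasSecondDerivAt.const 1 x).add (hsq x)).add (.const _ x)).add (.const _ x),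
    ((HasSecondDerivAt.const _ y).add (hsq y)).add (.const _ y), by norm_num⟩

theorem norm_le_of_lt_heatPenalty {B η t x y : ℝ} (hη : 0 < η) (ht : 0 ≤ t)
    (hB : η * heatPenalty t x y < B) : ‖(x, y)‖ ≤ B / η := by
  have hpen : heatPenalty t x y ≤ B / η := by
    rw [le_div_iff₀' hη]
    exact hB.le
  unfold heatPenalty at hpen
  rw [Prod.norm_mk, Real.norm_eq_abs, Real.norm_eq_abs]
  refine max_le (abs_le.mpr ?_) (abs_le.mpr ?_)
  · constructor <;> nlinarith [sq_nonneg (x - 1), sq_nonneg (x + 1), sq_nonneg y]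
  · constructor <;> nlinarith [sq_nonneg (y - 1), sq_nonneg (y + 1), sq_nonneg x]

theorem le_heatPenalty_of_heatOp_nonpos {M η : ℝ} (hη : 0 < η) (hΩ : IsClosed Ω)
    (hcont : ContinuousOn (fun p : ℝ × ℝ × ℝ => Z p.1 p.2.1 p.2.2) (Icc 0 T ×ˢ Ω))
    (hbdd : ∀ t ∈ Icc 0 T, ∀ x y, (x, y) ∈ Ω → Z t x y ≤ M)
    (hinit : ∀ x y, (x, y) ∈ Ω → Z 0 x y ≤ 0)
    (hbdry : ∀ t ∈ Icc 0 T, ∀ x y, (x, y) ∈ frontier Ω → Z t x y ≤ 0)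
    (hheat : ∀ t ∈ Ioc 0 T, ∀ x y, (x, y) ∈ interior Ω → 0 < Z t x y →
      ∃ a ≤ 0, HasHeatOpAt Z a t x y) :
    ∀ t ∈ Icc 0 T, ∀ x y, (x, y) ∈ Ω → Z t x y ≤ η * heatPenalty t x y := by
  have hpen : ∀ t ≥ 0, ∀ x y, 0 < η * heatPenalty t x y :=
    fun t ht x y => mul_pos hη (heatPenalty_pos ht x y)
  suffices ∀ t ∈ Icc 0 T, ∀ x y, (x, y) ∈ Ω → Z t x y - η * heatPenalty t x y ≤ 0 from
    fun t ht x y hxy => sub_nonpos.mp (this t ht x y hxy)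
  refine nonpos_of_heatOp_neg (R := M / η) hΩ ?_ ?_ ?_ ?_ ?_
  · unfold heatPenalty
    exact hcont.sub (by fun_prop)
  · intro t ht x y hxy hpos
    exact norm_le_of_lt_heatPenalty hη ht.1 (by linarith [hbdd t ht x y hxy])
  · intro x y hxy
    linarith [hinit x y hxy, hpen 0 le_rfl x y]
  · intro t ht x y hxy
    linarith [hbdry t ht x y hxy, hpen t ht.1 x y]
  · intro t ht x y hxy hpos
    obtain ⟨a, ha, hop⟩ := hheat t ht x y hxy (by linarith [hpen t ht.1.le x y])
    exact ⟨_, by linarith, hop.sub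
      ((hasHeatOpAt_heatPenalty t x y).time_mul (hasDerivAt_const t η))⟩

theorem nonpos_of_heatOp_nonpos {M : ℝ} (hΩ : IsClosed Ω)
    (hcont : ContinuousOn (fun p : ℝ × ℝ × ℝ => Z p.1 p.2.1 p.2.2) (Icc 0 T ×ˢ Ω))
    (hbdd : ∀ t ∈ Icc 0 T, ∀ x y, (x, y) ∈ Ω → Z t x y ≤ M)
    (hinit : ∀ x y, (x, y) ∈ Ω → Z 0 x y ≤ 0)
    (hbdry : ∀ t ∈ Icc 0 T, ∀ x y, (x, y) ∈ frontier Ω → Z t x y ≤ 0)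
    (hheat : ∀ t ∈ Ioc 0 T, ∀ x y, (x, y) ∈ interior Ω → 0 < Z t x y →
      ∃ a ≤ 0, HasHeatOpAt Z a t x y) :
    ∀ t ∈ Icc 0 T, ∀ x y, (x, y) ∈ Ω → Z t x y ≤ 0 := by
  intro t ht x y hxy
  refine le_of_forall_pos_le_add fun ε hε => ?_
  have hpen := heatPenalty_pos ht.1 x y
  simpa [div_mul_cancel₀ ε hpen.ne'] using
    le_heatPenalty_of_heatOp_nonpos (div_pos hε hpen) hΩ hcont hbdd hinit hbdry hheat t ht x y hxy

theorem parabolic_maximum_principle {k M : ℝ} (hΩ : IsClosed Ω)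
    (hcont : ContinuousOn (fun p : ℝ × ℝ × ℝ => Z p.1 p.2.1 p.2.2) (Icc 0 T ×ˢ Ω))
    (hbdd : ∀ t ∈ Icc 0 T, ∀ x y, (x, y) ∈ Ω → Z t x y ≤ M)
    (hinit : ∀ x y, (x, y) ∈ Ω → Z 0 x y ≤ 0)
    (hbdry : ∀ t ∈ Icc 0 T, ∀ x y, (x, y) ∈ frontier Ω → Z t x y ≤ 0)
    (hheat : ∀ t ∈ Ioc 0 T, ∀ x y, (x, y) ∈ interior Ω → 0 < Z t x y →
      ∃ a ≤ k * Z t x y, HasHeatOpAt Z a t x y) :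
    ∀ t ∈ Icc 0 T, ∀ x y, (x, y) ∈ Ω → Z t x y ≤ 0 := by
  set E : ℝ → ℝ := fun t => Real.exp (-k * t) with hE
  have hEpos : ∀ t, 0 < E t := fun t => Real.exp_pos _
  have hEderiv : ∀ t, HasDerivAt E (-k * E t) t := fun t => by
    simpa [hE, mul_comm] using ((hasDerivAt_id t).const_mul (-k)).exp
  have hEcont : Continuous E := continuous_iff_continuousAt.mpr fun t => (hEderiv t).continuousAt
  obtain ⟨B, hB⟩ := (isCompact_Icc (a := (0 : ℝ)) (b := T)).bddAbove_image
    (hEcont.mul_const |M|).continuousOn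
  suffices ∀ t ∈ Icc 0 T, ∀ x y, (x, y) ∈ Ω → E t * Z t x y ≤ 0 from
    fun t ht x y hxy => nonpos_of_mul_nonpos_right (this t ht x y hxy) (hEpos t)
  refine nonpos_of_heatOp_nonpos (M := B) hΩ ((hEcont.comp continuous_fst).continuousOn.mul hcont)
    ?_ ?_ ?_ ?_
  · exact fun t ht x y hxy => (mul_le_mul_of_nonneg_left
      ((hbdd t ht x y hxy).trans (le_abs_self M)) (hEpos t).le).trans (hB (mem_image_of_mem _ ht))
  · exact fun x y hxy => mul_nonpos_of_nonneg_of_nonpos (hEpos 0).le (hinit x y hxy)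
  · exact fun t ht x y hxy => mul_nonpos_of_nonneg_of_nonpos (hEpos t).le (hbdry t ht x y hxy)
  · intro t ht x y hxy hpos
    obtain ⟨a, ha, hop⟩ := hheat t ht x y hxy (pos_of_mul_pos_right hpos (hEpos t).le)
    refine ⟨_, ?_, hop.time_mul (hEderiv t)⟩
    linarith [mul_le_mul_of_nonneg_left ha (hEpos t).le]

end MaximumPrinciple

/-! ### Bounded solutions of the heat equation with a source -/

/-- `w` is a classical solution of `w_t = w_xx + g` on `(0, ∞) × ℝ`, continuous up to time `0` and
bounded on every strip `[0, T] × ℝ`. -/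
structure IsHeatSolution (w g : ℝ → ℝ → ℝ) : Prop where
  continuousOn : ContinuousOn (fun p : ℝ × ℝ => w p.1 p.2) {p | 0 ≤ p.1}
  bounded : ∀ T, ∃ M, ∀ t ∈ Icc 0 T, ∀ x, |w t x| ≤ M
  eqn : ∀ t > 0, ∀ x, ∃ wt wxx, HasDerivAt (fun s => w s x) wt t ∧
    HasSecondDerivAt (w t) wxx x ∧ wt = wxx + g t x

namespace IsHeatSolution

variable {w g : ℝ → ℝ → ℝ}

theorem of_forall_pos (hw : ContinuousOn (fun p : ℝ × ℝ => w p.1 p.2) {p | 0 ≤ p.1})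
    (hbdd : ∀ T > 0, ∃ M, ∀ t ∈ Icc 0 T, ∀ x, |w t x| ≤ M)
    (heqn : ∀ t > 0, ∀ x, ∃ wt wxx, HasDerivAt (fun s => w s x) wt t ∧
      HasSecondDerivAt (w t) wxx x ∧ wt = wxx + g t x) : IsHeatSolution w g where
  continuousOn := hw
  bounded T := (hbdd (max T 1) (lt_max_of_lt_right one_pos)).imp fun _ hM t ht =>
    hM t ⟨ht.1, ht.2.trans (le_max_left _ _)⟩
  eqn := heqn

theorem of_stationary {m h : ℝ → ℝ} (hm : Continuous m) {M : ℝ} (hM : ∀ x, |m x| ≤ M)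
    (hm'' : ∀ x, HasSecondDerivAt m (-h x) x) :
    IsHeatSolution (fun _ => m) (fun _ => h) where
  continuousOn := (hm.comp continuous_snd).continuousOn
  bounded _ := ⟨M, fun _ _ => hM⟩
  eqn t _ x := ⟨0, -h x, hasDerivAt_const t _, hm'' x, (neg_add_cancel _).symm⟩

theorem neg (hw : IsHeatSolution w g) :
    IsHeatSolution (fun t x => -w t x) (fun t x => -g t x) where
  continuousOn := hw.continuousOn.neg
  bounded := by simpa only [abs_neg] using hw.bounded
  eqn t ht x := by
    obtain ⟨wt, wxx, hwt, hwxx, rfl⟩ := hw.eqn t ht x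
    exact ⟨_, _, hwt.neg, hwxx.neg, by ring⟩

theorem sub {v h : ℝ → ℝ → ℝ} (hw : IsHeatSolution w g) (hv : IsHeatSolution v h) :
    IsHeatSolution (fun t x => w t x - v t x) (fun t x => g t x - h t x) where
  continuousOn := hw.continuousOn.sub hv.continuousOn
  bounded T := by
    obtain ⟨M, hM⟩ := hw.bounded T
    obtain ⟨N, hN⟩ := hv.bounded T
    exact ⟨M + N, fun t ht x => (abs_sub _ _).trans (add_le_add (hM t ht x) (hN t ht x))⟩
  eqn t ht x := by
    obtain ⟨wt, wxx, hwt, hwxx, rfl⟩ := hw.eqn t ht x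
    obtain ⟨vt, vxx, hvt, hvxx, rfl⟩ := hv.eqn t ht x
    exact ⟨_, _, hwt.sub hvt, hwxx.sub hvxx, by ring⟩

theorem shift (hw : IsHeatSolution w g) {s : ℝ} (hs : 0 ≤ s) (θ : ℝ) :
    IsHeatSolution (fun t x => w (t + s) (x + θ)) (fun t x => g (t + s) (x + θ)) where
  continuousOn := hw.continuousOn.comp (f := fun p : ℝ × ℝ => (p.1 + s, p.2 + θ))
    (by fun_prop) fun _ hp => add_nonneg hp hs
  bounded T := (hw.bounded (T + s)).imp fun _ hM t ht x =>
    hM (t + s) ⟨add_nonneg ht.1 hs, add_le_add_left ht.2 s⟩ (x + θ)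
  eqn t ht x := by
    obtain ⟨wt, wxx, hwt, hwxx, rfl⟩ := hw.eqn (t + s) (add_pos_of_pos_of_nonneg ht hs) (x + θ)
    exact ⟨_, wxx, hwt.comp_add_const t s, hwxx.comp_add_const, rfl⟩

theorem hasHeatOpAt_fst_mul (hw : IsHeatSolution w g) {φ : ℝ → ℝ} {c t x y : ℝ} (ht : 0 < t)
    (hφ : HasSecondDerivAt φ c y) :
    HasHeatOpAt (fun t x y => w t x * φ y) (g t x * φ y - w t x * c) t x y := by
  obtain ⟨wt, wxx, hwt, hwxx, rfl⟩ := hw.eqn t ht x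
  exact ⟨_, _, _, hwt.mul_const _, hwxx.mul_const _, hφ.const_mul _, by ring⟩

theorem hasHeatOpAt_snd_mul (hw : IsHeatSolution w g) {φ : ℝ → ℝ} {c t x y : ℝ} (ht : 0 < t)
    (hφ : HasSecondDerivAt φ c x) :
    HasHeatOpAt (fun t x y => w t y * φ x) (g t y * φ x - w t y * c) t x y := by
  obtain ⟨wt, wxx, hwt, hwxx, rfl⟩ := hw.eqn t ht y
  exact ⟨_, _, _, hwt.mul_const _, hφ.const_mul _, hwxx.mul_const _, by ring⟩

theorem le_mul_exp (hw : IsHeatSolution w g) {k d : ℝ} (hd : 0 ≤ d)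
    (hg : ∀ t > 0, ∀ x, 0 < w t x → g t x ≤ k * w t x) (h0 : ∀ x, w 0 x ≤ d) :
    ∀ t ≥ 0, ∀ x, w t x ≤ d * Real.exp (k * t) := by
  intro t ht x
  obtain ⟨M, hM⟩ := hw.bounded t
  have hexp : ∀ s, HasDerivAt (fun s => d * Real.exp (k * s)) (k * (d * Real.exp (k * s))) s :=
    fun s => by
      simpa [mul_comm, mul_left_comm] using (((hasDerivAt_id s).const_mul k).exp).const_mul d
  have hexp0 : ∀ s, 0 ≤ d * Real.exp (k * s) := fun s => mul_nonneg hd (Real.exp_pos _).le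
  have hcomparison := parabolic_maximum_principle (T := t) (k := k) (M := M) (Ω := univ)
    (Z := fun s x _ => w s x * 1 - d * Real.exp (k * s) * 1) isClosed_univ ?_ ?_ ?_ ?_ ?_
    t ⟨ht, le_rfl⟩ x 0 trivial
  · simpa using hcomparison
  · have hwcont : ContinuousOn (fun p : ℝ × ℝ × ℝ => w p.1 p.2.1) (Icc 0 t ×ˢ univ) :=
      hw.continuousOn.comp (f := fun p : ℝ × ℝ × ℝ => (p.1, p.2.1)) (by fun_prop)
        fun _ hp => hp.1.1
    exact (hwcont.mul_const 1).sub (by fun_prop)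
  · intro s hs x y _
    linarith [(abs_le.mp (hM s hs x)).2, hexp0 s]
  · intro x y _
    simpa using h0 x
  · simp
  · intro s hs x y _ hpos
    refine ⟨_, ?_, (hw.hasHeatOpAt_fst_mul hs.1 (.const 1 y)).sub
      ((HasHeatOpAt.const 1 s x y).time_mul (hexp s))⟩
    linarith [hg s hs.1 x (by linarith [hexp0 s])]

theorem abs_sub_le_mul_exp {f : ℝ → ℝ} {u v : ℝ → ℝ → ℝ} {k d : ℝ}
    (hf : ∀ a b, a ≤ b → f b - f a ≤ k * (b - a)) (hu : IsHeatSolution u (fun t x => f (u t x)))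
    (hv : IsHeatSolution v (fun t x => f (v t x))) (h0 : ∀ x, |u 0 x - v 0 x| ≤ d) :
    ∀ t ≥ 0, ∀ x, |u t x - v t x| ≤ d * Real.exp (k * t) := by
  intro t ht x
  have hd : 0 ≤ d := (abs_nonneg _).trans (h0 0)
  refine abs_sub_le_iff.mpr ⟨?_, ?_⟩
  · exact (hu.sub hv).le_mul_exp hd (fun t _ x hpos => hf _ _ (sub_pos.mp hpos).le)
      (fun x => (abs_sub_le_iff.mp (h0 x)).1) t ht x
  · exact (hv.sub hu).le_mul_exp hd (fun t _ x hpos => hf _ _ (sub_pos.mp hpos).le)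
      (fun x => (abs_sub_le_iff.mp (h0 x)).2) t ht x

end IsHeatSolution

/-! ### The two-point barrier of a ground state -/

/-- `φ` is a ground state of the operator `∂² + q`: a positive solution of `φ'' + q φ = 0` that
vanishes at infinity, with `φ' = ψ = O(φ)`. The potential `q` is bounded above and uniformly
negative near infinity, which is what isolates the eigenvalue `0`. -/
structure IsGroundState (q φ ψ : ℝ → ℝ) : Prop where
  pos : ∀ x, 0 < φ x
  hasDerivAt : ∀ x, HasDerivAt φ (ψ x) x
  hasDerivAt_deriv : ∀ x, HasDerivAt ψ (-(q x * φ x)) x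
  tendsto_zero : Tendsto φ (cocompact ℝ) (𝓝 0)
  abs_deriv_le : ∃ B, ∀ x, |ψ x| ≤ B * φ x
  potential_le : ∃ κ, ∀ x, q x ≤ κ
  potential_neg : ∃ ρ > 0, ∀ᶠ x in cocompact ℝ, q x ≤ -ρ

theorem exists_forall_of_le_abs {p : ℝ → Prop} (hp : ∀ᶠ x in cocompact ℝ, p x) :
    ∃ X, ∀ x, X ≤ |x| → p x := by
  rw [← Metric.cobounded_eq_cocompact, (Metric.hasBasis_cobounded_compl_ball 0).eventually_iff]
    at hp
  simpa using hp

/-- A barrier for the cross difference `w x * φ y - w y * φ x` on `{y ≤ x}`. With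
`E = exp (-λ (x - y))`, the term `φ x φ y (2 - E)` is bounded and comparable to `φ x φ y`, but the
second derivatives of `-E` make it a strict supersolution where `x` and `y` both stay bounded. -/
noncomputable def twoPointBarrier (φ : ℝ → ℝ) (K lam x y : ℝ) : ℝ :=
  K * (φ x * φ y * (2 - Real.exp (-lam * (x - y)))) + φ x + φ y

theorem twoPointBarrier_comm (φ : ℝ → ℝ) (K lam x y : ℝ) :
    twoPointBarrier φ K lam x y = twoPointBarrier φ K (-lam) y x := by
  unfold twoPointBarrier
  rw [show - -lam * (y - x) = -lam * (x - y) by ring]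
  ring

/-- `P` is a stationary strict supersolution, with rate `c` and between `φ x + φ y` and `N`, of
`Z_t = Z_xx + Z_yy + (q x + q y) Z` on `{y ≤ x}`. -/
structure IsTwoPointSupersolution (q φ : ℝ → ℝ) (c N : ℝ) (P : ℝ → ℝ → ℝ) : Prop where
  continuous : Continuous fun p : ℝ × ℝ => P p.1 p.2
  add_le : ∀ x y, y ≤ x → φ x + φ y ≤ P x y
  le_bound : ∀ x y, y ≤ x → P x y ≤ N
  heatOp_ge : ∀ t x y, y ≤ x →
    ∃ a ≥ (q x + q y + c) * P x y, HasHeatOpAt (fun _ => P) a t x y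

namespace IsGroundState

variable {q φ ψ : ℝ → ℝ}

theorem continuous (h : IsGroundState q φ ψ) : Continuous φ :=
  continuous_iff_continuousAt.mpr fun x => (h.hasDerivAt x).continuousAt

theorem hasSecondDerivAt (h : IsGroundState q φ ψ) (x : ℝ) :
    HasSecondDerivAt φ (-(q x * φ x)) x :=
  .of_hasDerivAt h.hasDerivAt (h.hasDerivAt_deriv x)

theorem exists_upper_bound (h : IsGroundState q φ ψ) : ∃ N > 0, ∀ x, φ x ≤ N := by
  obtain ⟨x₀, hx₀⟩ := h.continuous.exists_forall_ge' 0
    ((h.tendsto_zero.eventually_lt_const (h.pos 0)).mono fun _ => le_of_lt)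
  exact ⟨φ x₀, h.pos x₀, hx₀⟩

theorem exists_lower_bound (h : IsGroundState q φ ψ) (X : ℝ) :
    ∃ p > 0, ∀ x, |x| ≤ X → p ≤ φ x := by
  rcases le_or_gt 0 X with hX | hX
  · obtain ⟨x₀, -, hx₀⟩ := (isCompact_Icc (a := -X) (b := X)).exists_isMinOn
      ⟨0, neg_nonpos.mpr hX, hX⟩ h.continuous.continuousOn
    exact ⟨φ x₀, h.pos x₀, fun x hx => hx₀ (abs_le.mp hx)⟩
  · exact ⟨1, one_pos, fun x hx => absurd (hX.trans_le (abs_nonneg x)) hx.not_gt⟩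

theorem exists_potential_le (h : IsGroundState q φ ψ) : ∃ κ ≥ 0, ∀ x, q x ≤ κ := by
  obtain ⟨κ, hκ⟩ := h.potential_le
  exact ⟨max κ 0, le_max_right _ _, fun x => (hκ x).trans (le_max_left _ _)⟩

-- If `y` is far out then either `x` is far out too, and both potentials are negative, or `φ y` is
-- negligible compared to `φ x`.
theorem exists_cross_potential_le_of_far (h : IsGroundState q φ ψ) :
    ∃ c > 0, ∃ X, ∀ x y, X ≤ |y| → q y * φ x + q x * φ y ≤ -c * (φ x + φ y) := by
  obtain ⟨κ, hκ, hq⟩ := h.exists_potential_le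
  obtain ⟨ρ, hρ, hneg⟩ := h.potential_neg
  obtain ⟨X₁, hX₁⟩ := exists_forall_of_le_abs hneg
  obtain ⟨p, hp, hφp⟩ := h.exists_lower_bound X₁
  obtain ⟨X₂, hX₂⟩ := exists_forall_of_le_abs
    (h.tendsto_zero.eventually_lt_const (show 0 < ρ * p / (2 * κ + ρ) by positivity))
  refine ⟨ρ / 2, half_pos hρ, max X₁ X₂, fun x y hy => ?_⟩
  have hqy : q y * φ x ≤ -ρ * φ x :=
    mul_le_mul_of_nonneg_right (hX₁ y ((le_max_left _ _).trans hy)) (h.pos x).le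
  rcases le_total X₁ |x| with hx | hx
  · have hqx : q x * φ y ≤ -ρ * φ y := mul_le_mul_of_nonneg_right (hX₁ x hx) (h.pos y).le
    linarith [mul_pos hρ (h.pos x), mul_pos hρ (h.pos y)]
  · have hqx : q x * φ y ≤ κ * φ y := mul_le_mul_of_nonneg_right (hq x) (h.pos y).le
    have hφy : φ y * (2 * κ + ρ) ≤ ρ * p :=
      (le_div_iff₀ (by positivity)).mp (hX₂ y ((le_max_right _ _).trans hy)).le
    linarith [mul_le_mul_of_nonneg_left (hφp x hx) hρ.le]

theorem exists_cross_potential_le (h : IsGroundState q φ ψ) {lam : ℝ} (hlam : 0 ≤ lam) :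
    ∃ c > 0, ∃ K ≥ 0, ∀ x y, q y * φ x + q x * φ y ≤
      K * (φ x * φ y * Real.exp (-lam * (x - y))) - c * (φ x + φ y) := by
  obtain ⟨κ, hκ, hq⟩ := h.exists_potential_le
  obtain ⟨N, hN, hφN⟩ := h.exists_upper_bound
  obtain ⟨c, hc, X, hfar⟩ := h.exists_cross_potential_le_of_far
  obtain ⟨p, hp, hφp⟩ := h.exists_lower_bound X
  set s := p * p * Real.exp (-lam * (2 * X))
  have hs : 0 < s := by positivity
  refine ⟨c, hc, (κ + c) * (2 * N) / s, by positivity, fun x y => ?_⟩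
  have hφx := h.pos x
  have hφy := h.pos y
  have hexp : 0 ≤ (κ + c) * (2 * N) / s * (φ x * φ y * Real.exp (-lam * (x - y))) := by positivity
  rcases le_or_gt X |y| with hy | hy
  · linarith [hfar x y hy]
  rcases le_or_gt X |x| with hx | hx
  · linarith [hfar y x hx]
  have hnear : s ≤ φ x * φ y * Real.exp (-lam * (x - y)) := by
    have hxy : x - y ≤ 2 * X := by linarith [(abs_le.mp hx.le).2, (abs_le.mp hy.le).1]
    exact mul_le_mul (mul_le_mul (hφp x hx.le) (hφp y hy.le) hp.le hφx.le)
      (Real.exp_le_exp.mpr (by nlinarith)) (Real.exp_pos _).le (by positivity)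
  calc q y * φ x + q x * φ y
      ≤ κ * φ x + κ * φ y := by gcongr <;> apply hq
    _ = (κ + c) * (φ x + φ y) - c * (φ x + φ y) := by ring
    _ ≤ (κ + c) * (2 * N) / s * s - c * (φ x + φ y) := by
      rw [div_mul_cancel₀ _ hs.ne']
      gcongr
      linarith [hφN x, hφN y]
    _ ≤ _ := by gcongr

theorem hasSecondDerivAt_twoPointBarrier_fst (h : IsGroundState q φ ψ) (K lam x y : ℝ) :
    HasSecondDerivAt (fun ξ => twoPointBarrier φ K lam ξ y)
      (-q x * (K * (φ x * φ y * (2 - Real.exp (-lam * (x - y)))) + φ x) +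
        K * Real.exp (-lam * (x - y)) * (2 * lam * (ψ x * φ y) - lam ^ 2 * (φ x * φ y))) x := by
  have hexp : ∀ ξ, HasDerivAt (fun ξ => Real.exp (-lam * (ξ - y)))
      (-lam * Real.exp (-lam * (ξ - y))) ξ := fun ξ => by
    simpa [mul_comm] using (((hasDerivAt_id ξ).sub_const y).const_mul (-lam)).exp
  have hfactor : HasSecondDerivAt (fun ξ => φ ξ * (2 - Real.exp (-lam * (ξ - y)))) _ x :=
    .mul h.hasDerivAt (h.hasDerivAt_deriv x) (fun ξ => (hexp ξ).const_sub 2)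
      ((hexp x).const_mul (-lam)).neg
  convert ((hfactor.const_mul (K * φ y)).add (h.hasSecondDerivAt x)).add (.const (φ y) x) using 1
  · ext ξ
    unfold twoPointBarrier
    ring
  · ring

theorem hasHeatOpAt_twoPointBarrier (h : IsGroundState q φ ψ) (K lam t x y : ℝ) :
    HasHeatOpAt (fun _ => twoPointBarrier φ K lam)
      ((q x + q y) * twoPointBarrier φ K lam x y +
        2 * lam * K * Real.exp (-lam * (x - y)) *
          (lam * (φ x * φ y) - ψ x * φ y + ψ y * φ x) -
        (q y * φ x + q x * φ y)) t x y := by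
  have hyy := h.hasSecondDerivAt_twoPointBarrier_fst K (-lam) y x
  simp only [← twoPointBarrier_comm, show - -lam * (y - x) = -lam * (x - y) by ring] at hyy
  refine ⟨0, _, _, hasDerivAt_const t _, h.hasSecondDerivAt_twoPointBarrier_fst K lam x y, hyy, ?_⟩
  unfold twoPointBarrier
  ring

theorem add_le_twoPointBarrier (h : IsGroundState q φ ψ) {K lam x y : ℝ} (hK : 0 ≤ K)
    (hlam : 0 ≤ lam) (hxy : y ≤ x) : φ x + φ y ≤ twoPointBarrier φ K lam x y := by
  have hexp : Real.exp (-lam * (x - y)) ≤ 1 := Real.exp_le_one_iff.mpr (by nlinarith)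
  have hbarrier : 0 ≤ K * (φ x * φ y * (2 - Real.exp (-lam * (x - y)))) :=
    mul_nonneg hK (mul_nonneg (mul_pos (h.pos x) (h.pos y)).le (by linarith))
  unfold twoPointBarrier
  linarith

theorem twoPointBarrier_le_mul_add (h : IsGroundState q φ ψ) {K N : ℝ} (hK : 0 ≤ K)
    (hN : ∀ x, φ x ≤ N) (lam x y : ℝ) :
    twoPointBarrier φ K lam x y ≤ (2 * K * N + 1) * (φ x + φ y) := by
  have hx := h.pos x
  have hy := h.pos y
  have hN0 : 0 ≤ N := hx.le.trans (hN x)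
  calc twoPointBarrier φ K lam x y
      ≤ K * (φ x * φ y * 2) + φ x + φ y := by
        unfold twoPointBarrier
        gcongr
        linarith [Real.exp_pos (-lam * (x - y))]
    _ ≤ K * (φ x * N * 2) + φ x + φ y := by
        gcongr
        exact hN y
    _ ≤ (2 * K * N + 1) * (φ x + φ y) := by linarith [mul_nonneg (mul_nonneg hK hN0) hy.le]

-- For `λ = 2 B + 1` the drift terms `2 λ E (ψ x φ y - φ x ψ y)` are dominated by `2 λ² E φ x φ y`.
theorem exists_isTwoPointSupersolution (h : IsGroundState q φ ψ) :
    ∃ c > 0, ∃ N ≥ 0, ∃ P, IsTwoPointSupersolution q φ c N P := by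
  obtain ⟨N, hN, hφN⟩ := h.exists_upper_bound
  obtain ⟨B, hB⟩ := h.abs_deriv_le
  have hB0 : 0 ≤ B := nonneg_of_mul_nonneg_left ((abs_nonneg _).trans (hB 0)) (h.pos 0)
  set lam := 2 * B + 1
  obtain ⟨c, hc, K, hK, hcross⟩ := h.exists_cross_potential_le (lam := lam) (by positivity)
  have hbound := h.twoPointBarrier_le_mul_add hK hφN lam
  refine ⟨c / (2 * K * N + 1), by positivity, (2 * K * N + 1) * (N + N), by positivity,
    twoPointBarrier φ K lam, ⟨?_, ?_, ?_, ?_⟩⟩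
  · have := h.continuous
    unfold twoPointBarrier
    fun_prop
  · exact fun x y hxy => h.add_le_twoPointBarrier hK (by positivity) hxy
  · exact fun x y _ => (hbound x y).trans (by gcongr <;> apply hφN)
  · intro t x y _
    refine ⟨_, ?_, h.hasHeatOpAt_twoPointBarrier K lam t x y⟩
    have hrate : c / (2 * K * N + 1) * twoPointBarrier φ K lam x y ≤ c * (φ x + φ y) := by
      rw [div_mul_eq_mul_div, div_le_iff₀ (by positivity), mul_assoc, mul_comm (φ x + φ y)]
      gcongr
      exact hbound x y
    have hdrift : φ x * φ y ≤ lam * (φ x * φ y) - ψ x * φ y + ψ y * φ x := by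
      linarith [mul_le_mul_of_nonneg_right ((le_abs_self _).trans (hB x)) (h.pos y).le,
        mul_le_mul_of_nonneg_right ((neg_le_abs _).trans (hB y)) (h.pos x).le]
    have hconvex : K * (φ x * φ y * Real.exp (-lam * (x - y))) ≤
        2 * lam * K * Real.exp (-lam * (x - y)) *
          (lam * (φ x * φ y) - ψ x * φ y + ψ y * φ x) := by
      have hφ := mul_pos (h.pos x) (h.pos y)
      calc K * (φ x * φ y * Real.exp (-lam * (x - y)))
          = 1 * K * Real.exp (-lam * (x - y)) * (φ x * φ y) := by ring
        _ ≤ _ := by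
          gcongr
          linarith
    linarith [hcross x y]

end IsGroundState

/-! ### Decay for the linearized equation -/

theorem abs_cross_le {φ : ℝ → ℝ} (hφ : ∀ x, 0 < φ x) {a b r x y : ℝ} (ha : |a| ≤ r)
    (hb : |b| ≤ r) : |a * φ y - b * φ x| ≤ r * (φ x + φ y) := by
  calc |a * φ y - b * φ x| ≤ |a| * φ y + |b| * φ x := by
        simpa only [abs_mul, abs_of_pos (hφ x), abs_of_pos (hφ y)] using
          abs_sub (a * φ y) (b * φ x)
    _ ≤ r * φ y + r * φ x := by
        have := hφ x
        have := hφ y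
        gcongr
    _ = r * (φ x + φ y) := by ring

namespace IsGroundState

variable {q φ ψ : ℝ → ℝ} {w g P : ℝ → ℝ → ℝ} {c d ε N T : ℝ}

theorem hasHeatOpAt_cross (h : IsGroundState q φ ψ) (hw : IsHeatSolution w g) {t : ℝ}
    (ht : 0 < t) (x y : ℝ) :
    HasHeatOpAt (fun t x y => w t x * φ y - w t y * φ x)
      ((q x + q y) * (w t x * φ y - w t y * φ x) +
        ((g t x - q x * w t x) * φ y - (g t y - q y * w t y) * φ x)) t x y := by
  convert (hw.hasHeatOpAt_fst_mul ht (h.hasSecondDerivAt y)).sub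
    (hw.hasHeatOpAt_snd_mul ht (h.hasSecondDerivAt x)) using 1
  ring

theorem exists_hasHeatOpAt_cross_sub_le (h : IsGroundState q φ ψ)
    (hP : IsTwoPointSupersolution q φ c N P) (hw : IsHeatSolution w g) (hε : 0 ≤ ε)
    {A : ℝ → ℝ} {t x y : ℝ} (ht : 0 < t) (hxy : y ≤ x) (hA : 0 ≤ A t)
    (hA' : HasDerivAt A (ε - c * A t) t) (hg : ∀ x, |g t x - q x * w t x| ≤ ε) :
    ∃ a ≤ (q x + q y) * (w t x * φ y - w t y * φ x - A t * P x y),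
      HasHeatOpAt (fun t x y => w t x * φ y - w t y * φ x - A t * P x y) a t x y := by
  obtain ⟨p, hp, hPop⟩ := hP.heatOp_ge t x y hxy
  refine ⟨_, ?_, (h.hasHeatOpAt_cross hw ht x y).sub (hPop.time_mul hA')⟩
  have hsource : (g t x - q x * w t x) * φ y - (g t y - q y * w t y) * φ x ≤ ε * (φ x + φ y) :=
    (le_abs_self _).trans (abs_cross_le h.pos (hg x) (hg y))
  have hforcing := mul_le_mul_of_nonneg_left (hP.add_le x y hxy) hε
  linarith [mul_le_mul_of_nonneg_left hp hA]

theorem continuousOn_cross_sub (h : IsGroundState q φ ψ)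
    (hP : IsTwoPointSupersolution q φ c N P) (hw : IsHeatSolution w g) {A : ℝ → ℝ}
    (hA : Continuous A) (Ω : Set (ℝ × ℝ)) :
    ContinuousOn (fun p : ℝ × ℝ × ℝ => w p.1 p.2.1 * φ p.2.2 - w p.1 p.2.2 * φ p.2.1 -
      A p.1 * P p.2.1 p.2.2) (Icc 0 T ×ˢ Ω) := by
  have hφ := h.continuous
  have hwx : ContinuousOn (fun p : ℝ × ℝ × ℝ => w p.1 p.2.1) (Icc 0 T ×ˢ Ω) :=
    hw.continuousOn.comp (f := fun p : ℝ × ℝ × ℝ => (p.1, p.2.1)) (by fun_prop) fun _ hp => hp.1.1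
  have hwy : ContinuousOn (fun p : ℝ × ℝ × ℝ => w p.1 p.2.2) (Icc 0 T ×ˢ Ω) :=
    hw.continuousOn.comp (f := fun p : ℝ × ℝ × ℝ => (p.1, p.2.2)) (by fun_prop) fun _ hp => hp.1.1
  have hPcont : Continuous fun p : ℝ × ℝ × ℝ => P p.2.1 p.2.2 := hP.continuous.comp continuous_snd
  exact ((hwx.mul (by fun_prop)).sub (hwy.mul (by fun_prop))).sub
    ((hA.comp continuous_fst).mul hPcont).continuousOn

theorem cross_le_mul_of_hasDerivAt (h : IsGroundState q φ ψ)
    (hP : IsTwoPointSupersolution q φ c N P) (hw : IsHeatSolution w g) (hT : 0 ≤ T)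
    (hw0 : ∀ x, |w 0 x| ≤ d) (hε : 0 ≤ ε)
    (hg : ∀ t ∈ Ioc 0 T, ∀ x, |g t x - q x * w t x| ≤ ε) {A : ℝ → ℝ} (hA : ∀ t, 0 ≤ A t)
    (hA' : ∀ t, HasDerivAt A (ε - c * A t) t) (hdA : d ≤ A 0) {x y : ℝ} (hxy : y ≤ x) :
    w T x * φ y - w T y * φ x ≤ A T * P x y := by
  obtain ⟨κ, -, hκ⟩ := h.exists_potential_le
  obtain ⟨M, hM⟩ := hw.bounded T
  have hM0 : 0 ≤ M := (abs_nonneg _).trans (hM 0 ⟨le_rfl, hT⟩ 0)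
  have hP0 : ∀ x y, y ≤ x → 0 ≤ P x y := fun x y hxy =>
    (add_pos (h.pos x) (h.pos y)).le.trans (hP.add_le x y hxy)
  have hAP : ∀ t x y, y ≤ x → 0 ≤ A t * P x y := fun t x y hxy => mul_nonneg (hA t) (hP0 x y hxy)
  have hcross : ∀ t x y r, (∀ x, |w t x| ≤ r) → y ≤ x →
      w t x * φ y - w t y * φ x ≤ r * P x y := fun t x y r hr hxy =>
    ((le_abs_self _).trans (abs_cross_le h.pos (hr x) (hr y))).trans
      (mul_le_mul_of_nonneg_left (hP.add_le x y hxy) ((abs_nonneg _).trans (hr 0)))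
  refine sub_nonpos.mp (parabolic_maximum_principle (k := 2 * κ) (M := M * N)
    (Z := fun t x y => w t x * φ y - w t y * φ x - A t * P x y)
    (isClosed_le continuous_snd continuous_fst) (h.continuousOn_cross_sub hP hw
      (continuous_iff_continuousAt.mpr fun t => (hA' t).continuousAt) _) ?_ ?_ ?_ ?_
    T ⟨hT, le_rfl⟩ x y hxy)
  · intro t ht x y hxy
    linarith [hcross t x y M (hM t ht) hxy, hAP t x y hxy,
      mul_le_mul_of_nonneg_left (hP.le_bound x y hxy) hM0]
  · intro x y hxy
    linarith [hcross 0 x y d hw0 hxy, mul_le_mul_of_nonneg_right hdA (hP0 x y hxy)]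
  · intro t _ x y hxy
    obtain rfl : y = x := frontier_le_subset_eq continuous_snd continuous_fst hxy
    linarith [hAP t y y le_rfl]
  · intro t ht x y hint hpos
    have hxy : y ≤ x := interior_subset (s := {p : ℝ × ℝ | p.2 ≤ p.1}) hint
    obtain ⟨a, ha, hop⟩ :=
      h.exists_hasHeatOpAt_cross_sub_le hP hw hε ht.1 hxy (hA t) (hA' t) (hg t ht)
    exact ⟨a, ha.trans (mul_le_mul_of_nonneg_right (by linarith [hκ x, hκ y]) hpos.le), hop⟩

theorem cross_le_mul_exp (h : IsGroundState q φ ψ)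
    (hP : IsTwoPointSupersolution q φ c N P) (hw : IsHeatSolution w g) (hc : 0 < c) (hT : 0 ≤ T)
    (hw0 : ∀ x, |w 0 x| ≤ d) (hε : 0 ≤ ε)
    (hg : ∀ t ∈ Ioc 0 T, ∀ x, |g t x - q x * w t x| ≤ ε) {x y : ℝ} (hxy : y ≤ x) :
    w T x * φ y - w T y * φ x ≤ (d * Real.exp (-c * T) + ε / c) * P x y := by
  have hd : 0 ≤ d := (abs_nonneg _).trans (hw0 0)
  refine h.cross_le_mul_of_hasDerivAt hP hw hT hw0 hε hg
    (A := fun t => d * Real.exp (-c * t) + ε / c) (fun t => by positivity) (fun t => ?_) ?_ hxy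
  · refine ((((hasDerivAt_id t).const_mul (-c)).exp.const_mul d).add_const (ε / c)).congr_deriv ?_
    simp only [id]
    field_simp
    ring
  · simpa using div_nonneg hε hc.le

theorem abs_cross_le_mul (h : IsGroundState q φ ψ) (hP : IsTwoPointSupersolution q φ c N P)
    (hw : IsHeatSolution w g) (hc : 0 < c) (hT : 0 ≤ T) (hw0 : ∀ x, |w 0 x| ≤ d) (hε : 0 ≤ ε)
    (hg : ∀ t ∈ Ioc 0 T, ∀ x, |g t x - q x * w t x| ≤ ε) (x y : ℝ) :
    |w T x * φ y - w T y * φ x| ≤ (d * Real.exp (-c * T) + ε / c) * N := by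
  have hd : 0 ≤ d := (abs_nonneg _).trans (hw0 0)
  have hA : 0 ≤ d * Real.exp (-c * T) + ε / c := by positivity
  wlog hxy : y ≤ x generalizing x y
  · rw [abs_sub_comm]
    exact this y x (le_of_not_ge hxy)
  have hupper := h.cross_le_mul_exp hP hw hc hT hw0 hε hg hxy
  have hlower := h.cross_le_mul_exp hP hw.neg hc hT (by simpa only [abs_neg] using hw0)
    hε (fun t ht x => by simpa only [mul_neg, neg_sub_neg, abs_sub_comm] using hg t ht x) hxy
  have hbound := mul_le_mul_of_nonneg_left (hP.le_bound x y hxy) hA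
  exact abs_le.mpr ⟨by linarith, by linarith⟩

theorem exists_linear_decay (h : IsGroundState q φ ψ) :
    ∃ c > 0, ∃ C ≥ 0, ∀ (w g : ℝ → ℝ → ℝ) (T d ε : ℝ), IsHeatSolution w g → 0 ≤ T →
      (∀ x, |w 0 x| ≤ d) → 0 ≤ ε → (∀ t ∈ Ioc 0 T, ∀ x, |g t x - q x * w t x| ≤ ε) →
      ∀ x, |w T x - w T 0 / φ 0 * φ x| ≤ C * (d * Real.exp (-c * T) + ε) := by
  obtain ⟨c, hc, N, hN, P, hP⟩ := h.exists_isTwoPointSupersolution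
  have hφ0 := h.pos 0
  refine ⟨c, hc, (1 + 1 / c) * N / φ 0, by positivity, fun w g T d ε hw hT hw0 hε hg x => ?_⟩
  have hd : 0 ≤ d := (abs_nonneg _).trans (hw0 0)
  calc |w T x - w T 0 / φ 0 * φ x|
      = |w T x * φ 0 - w T 0 * φ x| / φ 0 := by
        rw [← abs_of_pos hφ0, ← abs_div, abs_of_pos hφ0]
        congr 1
        field_simp
    _ ≤ (d * Real.exp (-c * T) + ε / c) * N / φ 0 := by
        gcongr
        exact h.abs_cross_le_mul hP hw hc hT hw0 hε hg x 0
    _ ≤ (1 + 1 / c) * (d * Real.exp (-c * T) + ε) * N / φ 0 := by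
        gcongr
        have : 0 ≤ d * Real.exp (-c * T) * (1 / c) := by positivity
        linarith [div_eq_mul_one_div ε c]
    _ = _ := by ring

end IsGroundState

/-! ### Stable waves -/

theorem abs_image_sub_le_of_abs_deriv_le {f f' : ℝ → ℝ} {L : ℝ} {s : Set ℝ} (hs : Convex ℝ s)
    (hf : ∀ x, HasDerivAt f (f' x) x) (hL : ∀ x ∈ s, |f' x| ≤ L) {x y : ℝ} (hx : x ∈ s)
    (hy : y ∈ s) : |f y - f x| ≤ L * |y - x| :=
  hs.norm_image_sub_le_of_norm_hasDerivWithin_le (fun x _ => (hf x).hasDerivWithinAt) hL hx hy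

theorem abs_taylor_one_le {f f' f'' : ℝ → ℝ} {L : ℝ} (hf : ∀ x, HasDerivAt f (f' x) x)
    (hf' : ∀ x, HasDerivAt f' (f'' x) x) (hL : ∀ x, |f'' x| ≤ L) (x a : ℝ) :
    |f (x + a) - f x - a * f' x| ≤ L * a ^ 2 := by
  have hL0 : 0 ≤ L := (abs_nonneg _).trans (hL 0)
  have hderiv : ∀ y, HasDerivAt (fun y => f y - y * f' x) (f' y - f' x) y := fun y =>
    ((hf y).sub ((hasDerivAt_id y).mul_const (f' x))).congr_deriv (by rw [one_mul])
  have hbound : ∀ y ∈ uIcc x (x + a), |f' y - f' x| ≤ L * |a| := fun y hy => by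
    refine (abs_image_sub_le_of_abs_deriv_le convex_univ hf' (fun y _ => hL y) (mem_univ x)
      (mem_univ y)).trans (mul_le_mul_of_nonneg_left ?_ hL0)
    simpa using abs_sub_left_of_mem_uIcc hy
  have hmean := abs_image_sub_le_of_abs_deriv_le (convex_uIcc x (x + a)) hderiv hbound
    left_mem_uIcc right_mem_uIcc
  calc |f (x + a) - f x - a * f' x|
      = |f (x + a) - (x + a) * f' x - (f x - x * f' x)| := by
        congr 1
        ring
    _ ≤ L * |a| * |x + a - x| := hmean
    _ = L * a ^ 2 := by rw [add_sub_cancel_left, mul_assoc, abs_mul_abs_self, sq]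

/-- `m` is an increasing standing wave of `u_t = u_xx + f(u)` which is spectrally stable: `m'` is a
ground state of the linearization `∂² + f'(m)`. The derivative of `m'` is written `-f(m)`, so that
`groundState` contains the wave equation `m'' + f(m) = 0`. -/
structure IsStableWave (f m : ℝ → ℝ) : Prop where
  bounded : ∃ M, ∀ x, |m x| ≤ M
  groundState : IsGroundState (fun x => deriv f (m x)) (deriv m) (fun x => -f (m x))
  oneSidedLipschitz : ∃ k, ∀ a b, a ≤ b → f b - f a ≤ k * (b - a)
  taylor : ∃ R, ∀ x w, |w| ≤ 1 → |f (m x + w) - f (m x) - deriv f (m x) * w| ≤ R * w ^ 2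

namespace IsStableWave

variable {f m : ℝ → ℝ}

theorem hasDerivAt (h : IsStableWave f m) (x : ℝ) : HasDerivAt m (deriv m x) x :=
  (differentiableAt_of_deriv_ne_zero (h.groundState.pos x).ne').hasDerivAt

theorem strictMono (h : IsStableWave f m) : StrictMono m :=
  strictMono_of_deriv_pos h.groundState.pos

theorem exists_abs_sub_le (h : IsStableWave f m) : ∃ N ≥ 0, ∀ x y, |m x - m y| ≤ N * |x - y| := by
  obtain ⟨N, hN, hm'⟩ := h.groundState.exists_upper_bound
  refine ⟨N, hN.le, fun x y => abs_image_sub_le_of_abs_deriv_le convex_univ h.hasDerivAt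
    (fun x _ => ?_) (mem_univ y) (mem_univ x)⟩
  rw [abs_of_pos (h.groundState.pos x)]
  exact hm' x

theorem exists_abs_taylor_le (h : IsStableWave f m) :
    ∃ L ≥ 0, ∀ x a, |m (x + a) - m x - a * deriv m x| ≤ L * a ^ 2 := by
  obtain ⟨N, hN, hm'⟩ := h.groundState.exists_upper_bound
  obtain ⟨B, hB⟩ := h.groundState.abs_deriv_le
  have hbound : ∀ x, |-f (m x)| ≤ |B| * N := fun x =>
    (hB x).trans (mul_le_mul (le_abs_self B) (hm' x) (h.groundState.pos x).le (abs_nonneg B))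
  exact ⟨|B| * N, by positivity,
    abs_taylor_one_le h.hasDerivAt h.groundState.hasDerivAt hbound⟩

theorem isHeatSolution (h : IsStableWave f m) :
    IsHeatSolution (fun _ => m) (fun _ x => f (m x)) := by
  obtain ⟨M, hM⟩ := h.bounded
  exact .of_stationary (continuous_iff_continuousAt.mpr fun x => (h.hasDerivAt x).continuousAt) hM
    fun x => .of_hasDerivAt h.hasDerivAt (h.groundState.hasDerivAt x)

theorem exists_abs_sub_le_mul_exp (h : IsStableWave f m) :
    ∃ k ≥ 0, ∀ (u : ℝ → ℝ → ℝ) (d : ℝ), IsHeatSolution u (fun t x => f (u t x)) →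
      (∀ x, |u 0 x - m x| ≤ d) → ∀ t ≥ 0, ∀ x, |u t x - m x| ≤ d * Real.exp (k * t) := by
  obtain ⟨k, hk⟩ := h.oneSidedLipschitz
  refine ⟨max k 0, le_max_right _ _, fun u d hu hu0 =>
    IsHeatSolution.abs_sub_le_mul_exp (fun a b hab => (hk a b hab).trans ?_) hu
      h.isHeatSolution hu0⟩
  exact mul_le_mul_of_nonneg_right (le_max_left _ _) (sub_nonneg.mpr hab)

theorem exists_linear_approx (h : IsStableWave f m) :
    ∃ c > 0, ∃ C ≥ 0, ∃ k ≥ 0, ∀ (u : ℝ → ℝ → ℝ) (T d : ℝ),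
      IsHeatSolution u (fun t x => f (u t x)) → 0 ≤ T → d * Real.exp (k * T) ≤ 1 →
      (∀ x, |u 0 x - m x| ≤ d) →
      (∀ x, |u T x - m x| ≤ d * Real.exp (k * T)) ∧
      ∀ x, |u T x - m x - (u T 0 - m 0) / deriv m 0 * deriv m x| ≤
        C * (d * Real.exp (-c * T) + (d * Real.exp (k * T)) ^ 2) := by
  obtain ⟨c, hc, C, hC, hdecay⟩ := h.groundState.exists_linear_decay
  obtain ⟨k, hk, hgrowth⟩ := h.exists_abs_sub_le_mul_exp
  obtain ⟨R, hR⟩ := h.taylor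
  have hR0 : 0 ≤ R := by simpa using (abs_nonneg _).trans (hR 0 1 (by simp))
  refine ⟨c, hc, C * (1 + R), by positivity, k, hk, fun u T d hu hT hsmall hu0 => ?_⟩
  have hd : 0 ≤ d := (abs_nonneg _).trans (hu0 0)
  have hw : ∀ t ∈ Icc 0 T, ∀ x, |u t x - m x| ≤ d * Real.exp (k * T) := fun t ht x => by
    refine (hgrowth u d hu hu0 t ht.1 x).trans ?_
    have := ht.2
    gcongr
  refine ⟨hw T ⟨hT, le_rfl⟩, fun x => ?_⟩
  refine (hdecay _ _ T d (R * (d * Real.exp (k * T)) ^ 2) (hu.sub h.isHeatSolution) hT hu0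
    (by positivity) (fun t ht x => ?_) x).trans ?_
  · have hwt := hw t (Ioc_subset_Icc_self ht) x
    refine le_trans ?_ ((hR x _ (hwt.trans hsmall)).trans
      (mul_le_mul_of_nonneg_left (sq_le_sq' (abs_le.mp hwt).1 (abs_le.mp hwt).2) hR0))
    rw [add_sub_cancel]
  · rw [mul_assoc]
    gcongr
    have hlin : 0 ≤ R * (d * Real.exp (-c * T)) := by positivity
    linarith [sq_nonneg (d * Real.exp (k * T))]

-- To first order `m + a m'` is the translate `m (· + a)`.
theorem exists_phase_approx (h : IsStableWave f m) :
    ∃ c > 0, ∃ C ≥ 0, ∃ k ≥ 0, ∀ (u : ℝ → ℝ → ℝ) (T d : ℝ),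
      IsHeatSolution u (fun t x => f (u t x)) → 0 ≤ T → d * Real.exp (k * T) ≤ 1 →
      (∀ x, |u 0 x - m x| ≤ d) →
      ∃ α, |α| ≤ C * (d * Real.exp (k * T)) ∧ ∀ x, |u T x - m (x - α)| ≤
        C * (d * Real.exp (-c * T) + (d * Real.exp (k * T)) ^ 2) := by
  obtain ⟨c, hc, C, hC, k, hk, happrox⟩ := h.exists_linear_approx
  obtain ⟨L, hL, htaylor⟩ := h.exists_abs_taylor_le
  set A := 1 / deriv m 0
  have hA : 0 < A := one_div_pos.mpr (h.groundState.pos 0)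
  refine ⟨c, hc, C + L * A ^ 2 + A, by positivity, k, hk, fun u T d hu hT hsmall hu0 => ?_⟩
  obtain ⟨hw, hlin⟩ := happrox u T d hu hT hsmall hu0
  have hd : 0 ≤ d := (abs_nonneg _).trans (hu0 0)
  set e := d * Real.exp (k * T)
  set a := (u T 0 - m 0) / deriv m 0
  have : 0 ≤ e := by positivity
  have ha : |a| ≤ A * e := by
    rw [abs_div, abs_of_pos (h.groundState.pos 0), div_eq_mul_one_div, mul_comm]
    gcongr
    exact hw 0
  have : 0 ≤ d * Real.exp (-c * T) := by positivity
  refine ⟨-a, ?_, fun x => ?_⟩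
  · rw [abs_neg]
    refine ha.trans ?_
    gcongr
    exact le_add_of_nonneg_left (by positivity)
  rw [sub_neg_eq_add]
  calc |u T x - m (x + a)|
      = |(u T x - m x - a * deriv m x) - (m (x + a) - m x - a * deriv m x)| := by
        congr 1
        ring
    _ ≤ C * (d * Real.exp (-c * T) + e ^ 2) + L * a ^ 2 :=
        (abs_sub _ _).trans (add_le_add (hlin x) (htaylor x a))
    _ ≤ C * (d * Real.exp (-c * T) + e ^ 2) + L * (A * e) ^ 2 := by
        gcongr _ + L * ?_
        exact sq_le_sq' (abs_le.mp ha).1 (abs_le.mp ha).2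
    _ ≤ (C + L * A ^ 2 + A) * (d * Real.exp (-c * T) + e ^ 2) := by
        have hslack : 0 ≤ L * A ^ 2 * (d * Real.exp (-c * T)) +
          A * (d * Real.exp (-c * T) + e ^ 2) := by positivity
        linarith

end IsStableWave

/-! ### Convergence to a translate -/

theorem exists_limit_of_halving {X : Type*} [PseudoMetricSpace X] [CompleteSpace X]
    {P : ℕ → X → Prop} {x₀ : X} {r : ℝ} (h0 : P 0 x₀)
    (hstep : ∀ k x, P k x → ∃ y, dist x y ≤ r / 2 ^ k ∧ P (k + 1) y) :
    ∃ z, ∀ k, ∃ x, P k x ∧ dist x z ≤ 2 * r / 2 ^ k := by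
  choose! next hdist hnext using hstep
  let x : ℕ → X := fun k => Nat.rec x₀ next k
  have hx : ∀ k, P k (x k) := fun k => by
    induction k with
    | zero => exact h0
    | succ k ih => exact hnext k (x k) ih
  have hgeom : ∀ k, dist (x k) (x (k + 1)) ≤ 2 * r / 2 / 2 ^ k := fun k => by
    rw [mul_div_cancel_left₀ r two_ne_zero]
    exact hdist k (x k) (hx k)
  obtain ⟨z, hz⟩ := cauchySeq_tendsto_of_complete (cauchySeq_of_le_geometric_two hgeom)
  exact ⟨z, fun k => ⟨x k, hx k, dist_le_of_le_geometric_two_of_tendsto hgeom hz k⟩⟩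

theorem tendsto_exp_neg_mul_atTop {c : ℝ} (hc : 0 < c) :
    Tendsto (fun t => Real.exp (-c * t)) atTop (𝓝 0) :=
  Real.tendsto_exp_atBot.comp (tendsto_id.const_mul_atTop_of_neg (neg_neg_of_pos hc))

theorem tendsto_of_abs_sub_le_mul_exp {g : ℝ → ℝ} {l c C D : ℝ} (hc : 0 < c)
    (hg : ∀ t ≥ 0, |g t - l| ≤ C * Real.exp (-c * t) * D) : Tendsto g atTop (𝓝 l) := by
  have hlim := ((tendsto_exp_neg_mul_atTop hc).const_mul C).mul_const D
  rw [mul_zero, zero_mul] at hlim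
  exact tendsto_iff_dist_tendsto_zero.mpr <| squeeze_zero' (.of_forall fun _ => dist_nonneg)
    ((eventually_ge_atTop 0).mono hg) hlim

theorem one_div_two_pow_le_exp {T t : ℝ} {j : ℕ} (hT : 0 < T) (ht : t ≤ (j + 1) * T) :
    1 / 2 ^ j ≤ 2 * Real.exp (-(Real.log 2 / T) * t) := by
  have hlog : 0 < Real.log 2 := Real.log_pos one_lt_two
  calc (1 : ℝ) / 2 ^ j = 2 * Real.exp (-((j + 1 : ℕ) * Real.log 2)) := by
        rw [Real.exp_neg, Real.exp_nat_mul, Real.exp_log two_pos, pow_succ]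
        field_simp
    _ = 2 * Real.exp (-(Real.log 2 / T) * ((j + 1) * T)) := by
        push_cast
        field_simp
    _ ≤ 2 * Real.exp (-(Real.log 2 / T) * t) := by
        have := mul_le_mul_of_nonneg_left ht (div_pos hlog hT).le
        gcongr 2 * Real.exp ?_
        linarith

/-- The uniform distance from `v` to the set of translates of `m`. The real-valued supremum is
meaningful when `v` and `m` are bounded. -/
noncomputable def waveDist (m v : ℝ → ℝ) : ℝ := ⨅ θ, ⨆ x, |v x - m (x - θ)|

namespace IsStableWave

variable {f m : ℝ → ℝ}

theorem exists_abs_sub_translate_le_mul_exp (h : IsStableWave f m) :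
    ∃ k ≥ 0, ∀ (u : ℝ → ℝ → ℝ) (s θ d : ℝ), IsHeatSolution u (fun t x => f (u t x)) → 0 ≤ s →
      (∀ x, |u s x - m (x - θ)| ≤ d) →
      ∀ t ≥ s, ∀ x, |u t x - m (x - θ)| ≤ d * Real.exp (k * (t - s)) := by
  obtain ⟨k, hk, hgrowth⟩ := h.exists_abs_sub_le_mul_exp
  refine ⟨k, hk, fun u s θ d hu hs hd t ht x => ?_⟩
  simpa using hgrowth _ d (hu.shift hs θ) (fun x => by simpa using hd (x + θ)) (t - s)
    (sub_nonneg.mpr ht) (x - θ)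

theorem exists_contraction (h : IsStableWave f m) :
    ∃ T > 0, ∃ A ≥ 0, ∃ β > 0, ∀ (u : ℝ → ℝ → ℝ) (s θ d : ℝ),
      IsHeatSolution u (fun t x => f (u t x)) → 0 ≤ s → d ≤ β →
      (∀ x, |u s x - m (x - θ)| ≤ d) →
      ∃ θ', dist θ θ' ≤ A * d ∧ ∀ x, |u (s + T) x - m (x - θ')| ≤ d / 2 := by
  obtain ⟨c, hc, C, hC, k, -, happrox⟩ := h.exists_phase_approx
  obtain ⟨T, hTC, hT⟩ : ∃ T, C * Real.exp (-c * T) < 1 / 4 ∧ 0 < T := by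
    have hlim := (tendsto_exp_neg_mul_atTop hc).const_mul C
    rw [mul_zero] at hlim
    exact ((hlim.eventually_lt_const (by norm_num)).and (eventually_gt_atTop 0)).exists
  set D := Real.exp (k * T)
  have hD : 0 < D := Real.exp_pos _
  refine ⟨T, hT, C * D, by positivity, min (1 / D) (1 / (4 * (C + 1) * D ^ 2)), by positivity,
    fun u s θ d hu hs hdβ hd => ?_⟩
  have hd0 : 0 ≤ d := (abs_nonneg _).trans (hd 0)
  have hsmall : d * D ≤ 1 := (le_div_iff₀ hD).mp (hdβ.trans (min_le_left _ _))
  have hquad : C * (d * D) ^ 2 ≤ d / 4 := by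
    have hdC : d * (4 * (C + 1) * D ^ 2) ≤ 1 :=
      (le_div_iff₀ (by positivity)).mp (hdβ.trans (min_le_right _ _))
    linarith [mul_le_mul_of_nonneg_left hdC hd0, sq_nonneg (d * D)]
  obtain ⟨α, hα, hx⟩ := happrox _ T d (hu.shift hs θ) hT.le hsmall
    fun x => by simpa using hd (x + θ)
  refine ⟨θ + α, ?_, fun x => ?_⟩
  · rwa [dist_self_add_right, Real.norm_eq_abs, mul_assoc, mul_comm D]
  calc |u (s + T) x - m (x - (θ + α))| = |u (T + s) (x - θ + θ) - m (x - θ - α)| := by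
        rw [sub_add_cancel, add_comm T, sub_sub]
    _ ≤ C * (d * Real.exp (-c * T) + (d * D) ^ 2) := hx (x - θ)
    _ = d * (C * Real.exp (-c * T)) + C * (d * D) ^ 2 := by ring
    _ ≤ d * (1 / 4) + d / 4 := by gcongr
    _ = d / 2 := by ring

theorem exists_discrete_convergence (h : IsStableWave f m) :
    ∃ T > 0, ∃ A ≥ 0, ∃ β > 0, ∀ (u : ℝ → ℝ → ℝ) (θ d : ℝ),
      IsHeatSolution u (fun t x => f (u t x)) → d ≤ β → (∀ x, |u 0 x - m (x - θ)| ≤ d) →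
      ∃ ζ, ∀ j : ℕ, ∃ θ', (∀ x, |u (j * T) x - m (x - θ')| ≤ d / 2 ^ j) ∧
        dist θ' ζ ≤ 2 * (A * d) / 2 ^ j := by
  obtain ⟨T, hT, A, hA, β, hβ, hstep⟩ := h.exists_contraction
  refine ⟨T, hT, A, hA, β, hβ, fun u θ d hu hdβ hd => exists_limit_of_halving (x₀ := θ)
    (P := fun j θ => ∀ x, |u (j * T) x - m (x - θ)| ≤ d / 2 ^ j) (by simpa using hd)
    fun j θ hj => ?_⟩
  have hd0 : 0 ≤ d := (abs_nonneg _).trans (hd 0)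
  obtain ⟨θ', hθ', hx⟩ := hstep u (j * T) θ (d / 2 ^ j) hu (by positivity)
    ((div_le_self hd0 (one_le_pow₀ one_le_two)).trans hdβ) hj
  refine ⟨θ', by rwa [mul_div_assoc], fun x => ?_⟩
  rw [Nat.cast_succ, add_one_mul, pow_succ, ← div_div]
  exact hx x

theorem exists_convergence (h : IsStableWave f m) :
    ∃ β > 0, ∃ c > 0, ∃ C > 0, ∀ (u : ℝ → ℝ → ℝ) (θ d : ℝ),
      IsHeatSolution u (fun t x => f (u t x)) → d ≤ β → (∀ x, |u 0 x - m (x - θ)| ≤ d) →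
      ∃ ζ, ∀ t ≥ 0, ∀ x, |u t x - m (x - ζ)| ≤ C * Real.exp (-c * t) * d := by
  obtain ⟨T, hT, A, hA, β, hβ, hdiscrete⟩ := h.exists_discrete_convergence
  obtain ⟨k, hk, hgrowth⟩ := h.exists_abs_sub_translate_le_mul_exp
  obtain ⟨N, hN, hlip⟩ := h.exists_abs_sub_le
  refine ⟨β, hβ, Real.log 2 / T, div_pos (Real.log_pos one_lt_two) hT,
    2 * (Real.exp (k * T) + 2 * N * A), by positivity, fun u θ d hu hdβ hd => ?_⟩
  have hd0 : 0 ≤ d := (abs_nonneg _).trans (hd 0)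
  obtain ⟨ζ, hζ⟩ := hdiscrete u θ d hu hdβ hd
  refine ⟨ζ, fun t ht x => ?_⟩
  set j := ⌊t / T⌋₊
  have hjt : j * T ≤ t := (le_div_iff₀ hT).mp (Nat.floor_le (by positivity))
  have htj : t ≤ (j + 1) * T := (div_le_iff₀ hT).mp (Nat.lt_floor_add_one _).le
  obtain ⟨η, hη, hηζ⟩ := hζ j
  have hflow : |u t x - m (x - η)| ≤ d / 2 ^ j * Real.exp (k * T) := by
    refine (hgrowth u (j * T) η (d / 2 ^ j) hu (by positivity) hη t hjt x).trans ?_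
    gcongr
    linarith
  have hphase : |m (x - η) - m (x - ζ)| ≤ N * (2 * (A * d) / 2 ^ j) := by
    refine (hlip _ _).trans (mul_le_mul_of_nonneg_left ?_ hN)
    rwa [sub_sub_sub_cancel_left, ← Real.dist_eq, dist_comm]
  calc |u t x - m (x - ζ)|
      ≤ |u t x - m (x - η)| + |m (x - η) - m (x - ζ)| := _root_.abs_sub_le _ _ _
    _ ≤ d / 2 ^ j * Real.exp (k * T) + N * (2 * (A * d) / 2 ^ j) := add_le_add hflow hphase
    _ = (Real.exp (k * T) + 2 * N * A) * d * (1 / 2 ^ j) := by ring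
    _ ≤ (Real.exp (k * T) + 2 * N * A) * d * (2 * Real.exp (-(Real.log 2 / T) * t)) := by
        gcongr
        exact one_div_two_pow_le_exp hT htj
    _ = _ := by ring

theorem phase_unique (h : IsStableWave f m) {u : ℝ → ℝ → ℝ} {c C d d' ζ ζ' : ℝ} (hc : 0 < c)
    (hζ : ∀ t ≥ 0, ∀ x, |u t x - m (x - ζ)| ≤ C * Real.exp (-c * t) * d)
    (hζ' : ∀ t ≥ 0, ∀ x, |u t x - m (x - ζ')| ≤ C * Real.exp (-c * t) * d') : ζ = ζ' :=
  sub_right_injective <| h.strictMono.injective <| tendsto_nhds_unique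
    (tendsto_of_abs_sub_le_mul_exp hc fun t ht => hζ t ht 0)
    (tendsto_of_abs_sub_le_mul_exp hc fun t ht => hζ' t ht 0)

theorem exists_abs_sub_le_of_waveDist_lt (h : IsStableWave f m) {v : ℝ → ℝ} {M d : ℝ}
    (hv : ∀ x, |v x| ≤ M) (hd : waveDist m v < d) : ∃ θ, ∀ x, |v x - m (x - θ)| ≤ d := by
  obtain ⟨N, hN⟩ := h.bounded
  obtain ⟨θ, hθ⟩ := exists_lt_of_ciInf_lt hd
  have hbdd : BddAbove (range fun x => |v x - m (x - θ)|) :=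
    ⟨M + N, forall_mem_range.mpr fun x => (abs_sub _ _).trans (add_le_add (hv x) (hN _))⟩
  exact ⟨θ, fun x => (le_ciSup hbdd x).trans hθ.le⟩

end IsStableWave

/-! ### The Allen–Cahn standing wave -/

theorem exists_tendsto_atTop_deriv_tendsto_zero {m m' : ℝ → ℝ} {l : ℝ}
    (hm : ∀ x, HasDerivAt m (m' x) x) (hl : Tendsto m atTop (𝓝 l)) :
    ∃ ξ : ℝ → ℝ, Tendsto ξ atTop atTop ∧ Tendsto (fun y => m' (ξ y)) atTop (𝓝 0) := by
  have hslope : ∀ y, ∃ ξ ∈ Ioo y (y + 1), m' ξ = m (y + 1) - m y := fun y => by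
    simpa using exists_hasDerivAt_eq_slope m m' (lt_add_one y)
      (fun x _ => (hm x).continuousAt.continuousWithinAt) fun x _ => hm x
  choose ξ hξ hm'ξ using hslope
  refine ⟨ξ, tendsto_atTop_mono (fun y => (hξ y).1.le) tendsto_id, ?_⟩
  have hdiff := (hl.comp (tendsto_atTop_add_const_right atTop (1 : ℝ) tendsto_id)).sub hl
  rw [sub_self] at hdiff
  exact hdiff.congr fun y => (hm'ξ y).symm

theorem sq_deriv_eq_of_tendsto {F f m m' : ℝ → ℝ} {l : ℝ} (hF : ∀ s, HasDerivAt F (f s) s)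
    (hm : ∀ x, HasDerivAt m (m' x) x) (hm' : ∀ x, HasDerivAt m' (-f (m x)) x)
    (hl : Tendsto m atTop (𝓝 l)) (x : ℝ) : m' x ^ 2 = 2 * (F l - F (m x)) := by
  have henergy : ∀ y, HasDerivAt (fun y => m' y ^ 2 + 2 * F (m y)) 0 y := fun y => by
    refine (((hm' y).pow 2).add (((hF (m y)).comp y (hm y)).const_mul 2)).congr_deriv ?_
    simp only [Nat.add_one_sub_one, pow_one, Nat.cast_ofNat]
    ring
  have hconst : ∀ y, m' y ^ 2 + 2 * F (m y) = m' x ^ 2 + 2 * F (m x) := fun y =>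
    is_const_of_deriv_eq_zero (fun y => (henergy y).differentiableAt)
      (fun y => (henergy y).deriv) y x
  obtain ⟨ξ, hξ, hm'ξ⟩ := exists_tendsto_atTop_deriv_tendsto_zero hm hl
  have hlim : Tendsto (fun y => m' (ξ y) ^ 2 + 2 * F (m (ξ y))) atTop (𝓝 (0 ^ 2 + 2 * F l)) :=
    (hm'ξ.pow 2).add (((hF l).continuousAt.tendsto.comp (hl.comp hξ)).const_mul 2)
  have heq := tendsto_nhds_unique (hlim.congr fun y => hconst (ξ y)) tendsto_const_nhds
  linarith

theorem sq_one_sub_le_potential {n : ℕ} (hn : 1 ≤ n) {z : ℝ} (h0 : 0 ≤ z) (h1 : z ≤ 1) :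
    (1 - z) ^ 2 ≤ (n + 1) * (1 - z) - (1 - z ^ (n + 1)) := by
  induction n, hn using Nat.le_induction with
  | base => exact le_of_eq (by ring)
  | succ n _ ih =>
    have hpow : z ^ (n + 1) ≤ 1 := pow_le_one₀ h0 h1
    push_cast
    rw [pow_succ z (n + 1)]
    linarith [mul_nonneg (sub_nonneg.mpr h1) (sub_nonneg.mpr hpow)]

theorem abs_pow_taylor_le {a w : ℝ} (ha : |a| ≤ 1) (hw : |w| ≤ 1) (N : ℕ) :
    |(a + w) ^ (N + 1) - a ^ (N + 1) - (N + 1) * a ^ N * w| ≤ 4 ^ N * w ^ 2 := by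
  induction N with
  | zero => simpa using sq_nonneg w
  | succ N ih =>
    have hsum : |a + w| ≤ 2 := (abs_add_le a w).trans (by linarith)
    have hpow : |a ^ N| ≤ 1 := by
      rw [abs_pow]
      exact pow_le_one₀ (abs_nonneg a) ha
    have hcoeff : (N + 1 : ℝ) ≤ 4 ^ N := by
      exact_mod_cast Nat.lt_pow_self (show 1 < 4 by norm_num)
    calc |(a + w) ^ (N + 1 + 1) - a ^ (N + 1 + 1) - ((N + 1 : ℕ) + 1) * a ^ (N + 1) * w|
        = |(a + w) * ((a + w) ^ (N + 1) - a ^ (N + 1) - (N + 1) * a ^ N * w) +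
            (N + 1) * a ^ N * w ^ 2| := by
          congr 1
          push_cast
          ring
      _ ≤ |a + w| * |(a + w) ^ (N + 1) - a ^ (N + 1) - (N + 1) * a ^ N * w| +
            (N + 1) * |a ^ N| * w ^ 2 := by
          refine (abs_add_le _ _).trans_eq ?_
          rw [abs_mul, abs_mul, abs_mul, abs_of_pos (N.cast_add_one_pos (α := ℝ)),
            abs_of_nonneg (sq_nonneg w)]
      _ ≤ 2 * (4 ^ N * w ^ 2) + 4 ^ N * 1 * w ^ 2 := by gcongr
      _ ≤ 4 ^ (N + 1) * w ^ 2 := by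
          have : 0 ≤ 4 ^ N * w ^ 2 := by positivity
          rw [pow_succ 4]
          linarith

/-- The Allen–Cahn reaction term. -/
def reaction (n : ℕ) (s : ℝ) : ℝ := s - s ^ (2 * n + 1)

theorem hasDerivAt_reaction (n : ℕ) (s : ℝ) :
    HasDerivAt (reaction n) (1 - (2 * n + 1) * s ^ (2 * n)) s := by
  refine ((hasDerivAt_id s).sub (hasDerivAt_pow (2 * n + 1) s)).congr_deriv ?_
  push_cast
  rfl

theorem deriv_reaction (n : ℕ) (s : ℝ) : deriv (reaction n) s = 1 - (2 * n + 1) * s ^ (2 * n) :=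
  (hasDerivAt_reaction n s).deriv

theorem hasDerivAt_reaction_antideriv (n : ℕ) (s : ℝ) :
    HasDerivAt (fun s : ℝ => s ^ 2 / 2 - (s ^ 2) ^ (n + 1) / (2 * (n + 1))) (reaction n s) s := by
  refine (((hasDerivAt_pow 2 s).div_const 2).sub
    (((hasDerivAt_pow 2 s).pow (n + 1)).div_const _)).congr_deriv ?_
  simp only [reaction, Nat.add_sub_cancel]
  push_cast
  field_simp
  ring

theorem reaction_sub_le {n : ℕ} {a b : ℝ} (hab : a ≤ b) :
    reaction n b - reaction n a ≤ 1 * (b - a) := by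
  have hpow : a ^ (2 * n + 1) ≤ b ^ (2 * n + 1) :=
    (odd_two_mul_add_one n).strictMono_pow.monotone hab
  unfold reaction
  linarith

theorem abs_reaction_taylor_le (n : ℕ) {a w : ℝ} (ha : |a| ≤ 1) (hw : |w| ≤ 1) :
    |reaction n (a + w) - reaction n a - deriv (reaction n) a * w| ≤ 4 ^ (2 * n) * w ^ 2 := by
  refine (le_of_eq ?_).trans (abs_pow_taylor_le ha hw (2 * n))
  rw [← abs_neg, deriv_reaction]
  unfold reaction
  congr 1
  push_cast
  ring

theorem abs_reaction_le (n : ℕ) {s : ℝ} (hs : |s| ≤ 1) : |reaction n s| ≤ n * (1 - s ^ 2) := by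
  have hpow : (s ^ 2) ^ n ≤ 1 := pow_le_one₀ (sq_nonneg s) ((sq_le_one_iff_abs_le_one s).mpr hs)
  have hbernoulli : 1 - (s ^ 2) ^ n ≤ n * (1 - s ^ 2) := by
    have := one_add_mul_le_pow (a := s ^ 2 - 1) (by linarith [sq_nonneg s]) n
    rw [add_sub_cancel] at this
    linarith
  calc |reaction n s| = |s| * (1 - (s ^ 2) ^ n) := by
        rw [← abs_of_nonneg (sub_nonneg.mpr hpow), ← abs_mul]
        unfold reaction
        congr 1
        ring
    _ ≤ 1 * (1 - (s ^ 2) ^ n) := mul_le_mul_of_nonneg_right hs (sub_nonneg.mpr hpow)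
    _ ≤ n * (1 - s ^ 2) := by rwa [one_mul]

/-- `m` is an increasing solution of `m'' + m - m ^ (2 n + 1) = 0` joining `-1` to `1`. -/
structure IsStandingWave (n : ℕ) (m : ℝ → ℝ) : Prop where
  one_le : 1 ≤ n
  contDiff : ContDiff ℝ 2 m
  strictMono : StrictMono m
  ode : ∀ x, deriv (deriv m) x + m x - m x ^ (2 * n + 1) = 0
  tendsto_atTop : Tendsto m atTop (𝓝 1)
  tendsto_atBot : Tendsto m atBot (𝓝 (-1))

namespace IsStandingWave

variable {n : ℕ} {m : ℝ → ℝ}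

theorem abs_lt_one (h : IsStandingWave n m) (x : ℝ) : |m x| < 1 :=
  abs_lt.mpr
    ⟨(h.strictMono.monotone.le_of_tendsto h.tendsto_atBot _).trans_lt
      (h.strictMono (sub_one_lt x)),
    (h.strictMono (lt_add_one x)).trans_le (h.strictMono.monotone.ge_of_tendsto h.tendsto_atTop _)⟩

theorem sq_lt_one (h : IsStandingWave n m) (x : ℝ) : m x ^ 2 < 1 :=
  (sq_lt_one_iff_abs_lt_one _).mpr (h.abs_lt_one x)

theorem hasDerivAt (h : IsStandingWave n m) (x : ℝ) : HasDerivAt m (deriv m x) x :=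
  (h.contDiff.differentiable two_ne_zero x).hasDerivAt

theorem hasDerivAt_deriv (h : IsStandingWave n m) (x : ℝ) :
    HasDerivAt (deriv m) (-reaction n (m x)) x := by
  have hdiff : Differentiable ℝ (deriv m) :=
    (contDiff_succ_iff_deriv (n := 1).mp h.contDiff).2.2.differentiable one_ne_zero
  refine (hdiff x).hasDerivAt.congr_deriv ?_
  unfold reaction
  linarith [h.ode x]

theorem mul_sq_deriv_eq (h : IsStandingWave n m) (x : ℝ) :
    (n + 1) * deriv m x ^ 2 = (n + 1) * (1 - m x ^ 2) - (1 - (m x ^ 2) ^ (n + 1)) := by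
  rw [sq_deriv_eq_of_tendsto (hasDerivAt_reaction_antideriv n) h.hasDerivAt h.hasDerivAt_deriv
    h.tendsto_atTop x, one_pow, one_pow]
  field_simp
  ring

theorem sq_one_sub_sq_le (h : IsStandingWave n m) (x : ℝ) :
    (1 - m x ^ 2) ^ 2 ≤ (n + 1) * deriv m x ^ 2 := by
  rw [h.mul_sq_deriv_eq]
  exact sq_one_sub_le_potential h.one_le (sq_nonneg _) (h.sq_lt_one x).le

theorem deriv_pos (h : IsStandingWave n m) (x : ℝ) : 0 < deriv m x := by
  refine h.strictMono.monotone.deriv_nonneg.lt_of_ne' fun hzero => ?_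
  have hle := h.sq_one_sub_sq_le x
  rw [hzero, zero_pow two_ne_zero, mul_zero] at hle
  exact (pow_pos (sub_pos.mpr (h.sq_lt_one x)) 2).not_ge hle

theorem sq_deriv_le (h : IsStandingWave n m) (x : ℝ) : deriv m x ^ 2 ≤ 1 - m x ^ 2 := by
  have hpow : (m x ^ 2) ^ (n + 1) ≤ 1 := pow_le_one₀ (sq_nonneg _) (h.sq_lt_one x).le
  refine le_of_mul_le_mul_left ?_ (n.cast_add_one_pos (α := ℝ))
  linarith [h.mul_sq_deriv_eq x]

theorem one_sub_sq_le_mul_deriv (h : IsStandingWave n m) (x : ℝ) :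
    1 - m x ^ 2 ≤ (n + 1) * deriv m x := by
  have hderiv := h.deriv_pos x
  refine le_of_sq_le_sq ?_ (by positivity)
  calc (1 - m x ^ 2) ^ 2 ≤ (n + 1) * deriv m x ^ 2 := h.sq_one_sub_sq_le x
    _ ≤ (n + 1) ^ 2 * deriv m x ^ 2 := by
      gcongr
      exact le_self_pow₀ (by simp) two_ne_zero
    _ = ((n + 1) * deriv m x) ^ 2 := by ring

theorem abs_reaction_le_mul_deriv (h : IsStandingWave n m) (x : ℝ) :
    |-reaction n (m x)| ≤ n * (n + 1) * deriv m x := by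
  rw [abs_neg, mul_assoc]
  exact (abs_reaction_le n (h.abs_lt_one x).le).trans
    (mul_le_mul_of_nonneg_left (h.one_sub_sq_le_mul_deriv x) n.cast_nonneg)

theorem tendsto_sq_cocompact (h : IsStandingWave n m) :
    Tendsto (fun x => m x ^ 2) (cocompact ℝ) (𝓝 1) := by
  rw [cocompact_eq_atBot_atTop]
  exact .sup (by simpa using h.tendsto_atBot.pow 2) (by simpa using h.tendsto_atTop.pow 2)

theorem tendsto_deriv_cocompact (h : IsStandingWave n m) :
    Tendsto (deriv m) (cocompact ℝ) (𝓝 0) := by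
  have hsq : Tendsto (fun x => deriv m x ^ 2) (cocompact ℝ) (𝓝 0) :=
    squeeze_zero (fun _ => sq_nonneg _) h.sq_deriv_le
      (by simpa using h.tendsto_sq_cocompact.const_sub 1)
  simpa [Real.sqrt_sq (h.deriv_pos _).le] using hsq.sqrt

theorem tendsto_deriv_reaction_cocompact (h : IsStandingWave n m) :
    Tendsto (fun x => deriv (reaction n) (m x)) (cocompact ℝ) (𝓝 (-(2 * n))) := by
  have hlim := ((h.tendsto_sq_cocompact.pow n).const_mul (2 * n + 1 : ℝ)).const_sub 1
  simpa [deriv_reaction, pow_mul] using hlim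

theorem isGroundState (h : IsStandingWave n m) :
    IsGroundState (fun x => deriv (reaction n) (m x)) (deriv m) (fun x => -reaction n (m x)) where
  pos := h.deriv_pos
  hasDerivAt := h.hasDerivAt_deriv
  hasDerivAt_deriv x := by
    rw [deriv_reaction]
    exact ((hasDerivAt_reaction n (m x)).comp x (h.hasDerivAt x)).neg
  tendsto_zero := h.tendsto_deriv_cocompact
  abs_deriv_le := ⟨n * (n + 1), h.abs_reaction_le_mul_deriv⟩
  potential_le := ⟨1, fun x => by
    have : 0 ≤ (2 * n + 1) * m x ^ (2 * n) := by
      rw [pow_mul]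
      positivity
    rw [deriv_reaction]
    linarith⟩
  potential_neg := ⟨1, one_pos, (h.tendsto_deriv_reaction_cocompact.eventually_lt_const (by
    have : (1 : ℝ) ≤ n := by exact_mod_cast h.one_le
    linarith)).mono fun _ => le_of_lt⟩

theorem isStableWave (h : IsStandingWave n m) : IsStableWave (reaction n) m where
  bounded := ⟨1, fun x => (h.abs_lt_one x).le⟩
  groundState := h.isGroundState
  oneSidedLipschitz := ⟨1, fun _ _ => reaction_sub_le⟩
  taylor := ⟨4 ^ (2 * n), fun x _ => abs_reaction_taylor_le n (h.abs_lt_one x).le⟩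

end IsStandingWave

-- The phase does not depend on the bound `d > waveDist m (u 0)` it is obtained from, so `d` may
-- decrease to `waveDist m (u 0)`.
theorem stmt_2_general {f m : ℝ → ℝ} (h : IsStableWave f m) :
    ∃ β > 0, ∃ c > 0, ∃ C > 0, ∀ u : ℝ → ℝ → ℝ, IsHeatSolution u (fun t x => f (u t x)) →
      waveDist m (u 0) < β → ∃ ζ, ∀ t, 0 ≤ t →
        (⨆ x, |u t x - m (x - ζ)|) ≤ C * Real.exp (-c * t) * waveDist m (u 0) := by
  obtain ⟨β, hβ, c, hc, C, hC, hconv⟩ := h.exists_convergence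
  refine ⟨β, hβ, c, hc, C, hC, fun u hu hdist => ?_⟩
  obtain ⟨M, hM⟩ := hu.bounded 0
  have hphase : ∀ d ∈ Ioc (waveDist m (u 0)) β,
      ∃ ζ, ∀ t ≥ 0, ∀ x, |u t x - m (x - ζ)| ≤ C * Real.exp (-c * t) * d := fun d hd => by
    obtain ⟨θ, hθ⟩ := h.exists_abs_sub_le_of_waveDist_lt (hM 0 ⟨le_rfl, le_rfl⟩) hd.1
    exact hconv u θ d hu hd.2 hθ
  obtain ⟨ζ, hζ⟩ := hphase β ⟨hdist, le_rfl⟩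
  refine ⟨ζ, fun t ht => ciSup_le fun x => ?_⟩
  refine ge_of_tendsto (f := fun d => C * Real.exp (-c * t) * d)
    (x := 𝓝[>] waveDist m (u 0)) ((continuous_const_mul _).continuousWithinAt) ?_
  filter_upwards [Ioc_mem_nhdsGT hdist] with d hd
  obtain ⟨ζ', hζ'⟩ := hphase d hd
  rw [h.phase_unique hc hζ hζ']
  exact hζ' t ht x

/-- Exponential convergence of the deterministic Allen–Cahn flow to the manifold of
traveling waves, for initial data `L^∞`-close to the manifold. -/
theorem stmt_2 (n : ℕ) (hn : 1 ≤ n) (m : ℝ → ℝ)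
    (hm : ContDiff ℝ 2 m) (hmono : StrictMono m)
    (heq : ∀ x : ℝ, deriv (deriv m) x + m x - m x ^ (2 * n + 1) = 0)
    (h0 : m 0 = 0)
    (htop : Tendsto m atTop (nhds 1))
    (hbot : Tendsto m atBot (nhds (-1))) :
    ∃ β > (0:ℝ), ∃ c > (0:ℝ), ∃ C > (0:ℝ),
      ∀ (v : ℝ → ℝ) (u ut ux uxx : ℝ → ℝ → ℝ),
        Continuous v → (∃ M : ℝ, ∀ x : ℝ, |v x| ≤ M) →
        (⨅ θ : ℝ, ⨆ x : ℝ, |v x - m (x - θ)|) < β →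
        ContinuousOn (fun p : ℝ × ℝ => u p.1 p.2) {p : ℝ × ℝ | 0 ≤ p.1} →
        (∀ T > (0:ℝ), ∃ M : ℝ, ∀ t ∈ Set.Icc (0:ℝ) T, ∀ x : ℝ, |u t x| ≤ M) →
        (∀ x : ℝ, u 0 x = v x) →
        ContinuousOn (fun p : ℝ × ℝ => ut p.1 p.2) {p : ℝ × ℝ | 0 < p.1} →
        ContinuousOn (fun p : ℝ × ℝ => ux p.1 p.2) {p : ℝ × ℝ | 0 < p.1} →
        ContinuousOn (fun p : ℝ × ℝ => uxx p.1 p.2) {p : ℝ × ℝ | 0 < p.1} →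
        (∀ t : ℝ, 0 < t → ∀ x : ℝ,
          HasDerivAt (fun s => u s x) (ut t x) t ∧
          HasDerivAt (fun y => u t y) (ux t x) x ∧
          HasDerivAt (fun y => ux t y) (uxx t x) x ∧
          ut t x = uxx t x + u t x - u t x ^ (2 * n + 1)) →
        ∃ ζ : ℝ, ∀ t : ℝ, 0 ≤ t →
          (⨆ x : ℝ, |u t x - m (x - ζ)|)
            ≤ C * Real.exp (-c * t) * ⨅ θ : ℝ, ⨆ x : ℝ, |v x - m (x - θ)| := by
  obtain ⟨β, hβ, c, hc, C, hC, hconv⟩ :=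
    stmt_2_general (IsStandingWave.isStableWave ⟨hn, hm, hmono, heq, htop, hbot⟩)
  refine ⟨β, hβ, c, hc, C, hC, fun v u ut ux uxx _ _ hdist hu hbdd hinit _ _ _ hpde => ?_⟩
  obtain rfl : u 0 = v := funext hinit
  exact hconv u (.of_forall_pos hu hbdd fun t ht x =>
    ⟨ut t x, uxx t x, (hpde t ht x).1,
      .of_hasDerivAt (fun y => (hpde t ht y).2.1) (hpde t ht x).2.2.1,
      (hpde t ht x).2.2.2.trans (add_sub_assoc _ _ _)⟩) hdist
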